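/- arXiv:1405.4410 — 3 statements merged into one kernel-verified Lean document; each statement's English description precedes it below -/
import Mathlib

section
/- Let u : ℝⁿ → [0,∞) be a nonnegative C¹ function which is a solution of div A(x,Du) + b(x)|Du|^α ≥ 0 in ℝⁿ. Then for every r > 0 one has max_{|x|=r} u(x) = max_{|x|≤r} u(x). -/
open MeasureTheory Metric Set Filter
open scoped RealInnerProductSpace ENNReal

noncomputable section

abbrev Euc (n : ℕ) := EuclideanSpace ℝ (Fin n)

/-- Weak solution of `div A(x,Dv) + b(x)|Dv|^α ≥ a(x)` on an open set `U`:
for every nonnegative test function `φ ∈ C₀^∞(U)`,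
`-∫ A(x,Dv)·Dφ + ∫ b |Dv|^α φ ≥ ∫ a φ`. -/
def IsWeakSol {n : ℕ} (A : Euc n → Euc n → Euc n) (b : Euc n → ℝ) (α : ℝ)
    (a : Euc n → ℝ) (U : Set (Euc n)) (v : Euc n → ℝ) : Prop :=
  ∀ φ : Euc n → ℝ, ContDiff ℝ (⊤ : ℕ∞) φ → HasCompactSupport φ → tsupport φ ⊆ U →
    (∀ x, 0 ≤ φ x) →
    (∫ x in U, a x * φ x) ≤
      (-(∫ x in U, ⟪A x (gradient v x), gradient φ x⟫)) +
        ∫ x in U, b x * ‖gradient v x‖ ^ α * φ x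

/-- Structural conditions on `A`: measurability, coercivity and growth. -/
def StructCond {n : ℕ} (A : Euc n → Euc n → Euc n) (p C₁ C₂ : ℝ) : Prop :=
  Measurable (Function.uncurry A) ∧
    ∀ x ζ : Euc n, C₁ * ‖ζ‖ ^ p ≤ ⟪ζ, A x ζ⟫ ∧ ‖A x ζ‖ ≤ C₂ * ‖ζ‖ ^ (p - 1)

/-- Locally bounded function on `ℝⁿ`. -/
def LocBdd {n : ℕ} (b : Euc n → ℝ) : Prop :=
  ∀ K : Set (Euc n), IsCompact K → ∃ C, ∀ x ∈ K, b x ≤ C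

/-- `M(r; u) = max_{|x| = r} u x`. -/
def sphMax {n : ℕ} (u : Euc n → ℝ) (r : ℝ) : ℝ := sSup (u '' Metric.sphere (0 : Euc n) r)

/-- `g_θ(t) = inf_{s ∈ (t/θ, θ t)} g s`. -/
def ginf (g : ℝ → ℝ) (θ t : ℝ) : ℝ := sInf (g '' Set.Ioo (t / θ) (θ * t))

/-- The open annulus `{x : r₁ < |x| < r₂}`. -/
def Ann (n : ℕ) (r₁ r₂ : ℝ) : Set (Euc n) := {x : Euc n | r₁ < ‖x‖ ∧ ‖x‖ < r₂}

/-- `q_σ(r) = ess inf_{r/σ < |x| < σ r} q x`. -/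
def qinf {n : ℕ} (q : Euc n → ℝ) (σ r : ℝ) : ℝ :=
  essInf q (volume.restrict (Ann n (r / σ) (σ * r)))

/-- `f_σ(r) = q_σ(r) / (1 + r q_σ(r)^{(α-p+1)/α} ess sup_{r/σ<|x|<σr} b^{(p-1)/α})`. -/
def fdef {n : ℕ} (q b : Euc n → ℝ) (p α σ r : ℝ) : ℝ :=
  qinf q σ r /
    (1 + r * qinf q σ r ^ ((α - p + 1) / α) *
      essSup (fun x => b x ^ ((p - 1) / α)) (volume.restrict (Ann n (r / σ) (σ * r))))

open scoped Topology Convolution in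
/-- Mollification of a compactly supported nonnegative `C¹` function. -/
lemma exists_mollify {n : ℕ} (φ : Euc n → ℝ) (hφ : ContDiff ℝ 1 φ) (hc : HasCompactSupport φ)
    (h0 : ∀ x, 0 ≤ φ x) :
    ∃ (ψ : ℕ → Euc n → ℝ) (R M : ℝ), (∀ j, ContDiff ℝ (⊤ : ℕ∞) (ψ j) ∧ HasCompactSupport (ψ j) ∧
      ∀ x, 0 ≤ ψ j x) ∧ (∀ j x, ‖ψ j x‖ ≤ M ∧ ‖fderiv ℝ (ψ j) x‖ ≤ M) ∧
      (∀ j x, x ∉ Metric.closedBall (0 : Euc n) R → ψ j x = 0 ∧ fderiv ℝ (ψ j) x = 0) ∧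
      (∀ x, Tendsto (fun j => ψ j x) atTop (𝓝 (φ x))) ∧
      (∀ x, Tendsto (fun j => fderiv ℝ (ψ j) x) atTop (𝓝 (fderiv ℝ φ x))) := by
  have hd : Continuous (fderiv ℝ φ) := hφ.continuous_fderiv one_ne_zero
  obtain ⟨M₁, hM₁⟩ := hc.exists_bound_of_continuous hφ.continuous
  obtain ⟨M₂, hM₂⟩ := (hc.fderiv ℝ).exists_bound_of_continuous hd
  obtain ⟨R, hR⟩ := hc.isCompact.isBounded.subset_closedBall (0 : Euc n)
  have hM10 : 0 ≤ M₁ := (norm_nonneg _).trans (hM₁ 0)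
  have hM20 : 0 ≤ M₂ := (norm_nonneg _).trans (hM₂ 0)
  have hz : ∀ x, R < ‖x‖ → φ x = 0 ∧ fderiv ℝ φ x = 0 := by
    intro x hx
    have hx' : x ∉ tsupport φ := fun h => by
      have := hR h
      simp at this
      linarith
    refine ⟨image_eq_zero_of_notMem_tsupport hx', ?_⟩
    have h2 : x ∉ tsupport (fderiv ℝ φ) := fun h => hx' (tsupport_fderiv_subset ℝ h)
    exact image_eq_zero_of_notMem_tsupport h2
  let B : ℕ → ContDiffBump (0 : Euc n) := fun j =>
    ⟨(1 / ((j : ℝ) + 1)) / 2, 1 / ((j : ℝ) + 1), by positivity, half_lt_self (by positivity)⟩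
  have hB : ∀ j, (B j).rOut = 1 / ((j : ℝ) + 1) := fun j => rfl
  have hB1 : ∀ j, (B j).rOut ≤ 1 := fun j => by
    rw [hB, div_le_one (by positivity)]
    have : (0 : ℝ) ≤ j := Nat.cast_nonneg j
    linarith
  have hBt : Tendsto (fun j => (B j).rOut) atTop (𝓝 0) := tendsto_one_div_add_atTop_nhds_zero_nat
  let ψ : ℕ → Euc n → ℝ := fun j =>
    ((B j).normed volume ⋆[ContinuousLinearMap.lsmul ℝ ℝ, volume] φ)
  have hpre : (ContinuousLinearMap.lsmul ℝ ℝ : ℝ →L[ℝ] ℝ →L[ℝ] ℝ).precompR (Euc n) =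
      (ContinuousLinearMap.lsmul ℝ ℝ : ℝ →L[ℝ] (Euc n →L[ℝ] ℝ) →L[ℝ] (Euc n →L[ℝ] ℝ)) := by
    ext; simp
  have hfd : ∀ j x, fderiv ℝ (ψ j) x =
      ((B j).normed volume ⋆[ContinuousLinearMap.lsmul ℝ ℝ, volume] (fderiv ℝ φ)) x := by
    intro j x
    have := (hc.hasFDerivAt_convolution_right (ContinuousLinearMap.lsmul ℝ ℝ)
      ((B j).continuous_normed (μ := volume)).locallyIntegrable (μ := volume) hφ x).fderiv
    rw [hpre] at this
    exact this
  have hball : ∀ j x, x ∉ Metric.closedBall (0 : Euc n) (R + 1) → ∀ y ∈ ball x (B j).rOut,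
      R < ‖y‖ := by
    intro j x hx y hy
    simp at hx
    have h1 : dist y x < 1 := lt_of_lt_of_le (mem_ball.1 hy) (hB1 j)
    rw [dist_eq_norm] at h1
    have h2 : ‖x‖ ≤ ‖y‖ + ‖y - x‖ := by
      have := norm_sub_le y (y - x)
      simpa using this
    linarith
  refine ⟨ψ, R + 1, max M₁ M₂, fun j => ⟨?_, ?_, ?_⟩, fun j x => ⟨?_, ?_⟩, fun j x hx => ⟨?_, ?_⟩,
    fun x => ?_, fun x => ?_⟩
  · exact ((B j).hasCompactSupport_normed).contDiff_convolution_left _ (B j).contDiff_normed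
      hφ.continuous.locallyIntegrable
  · exact ((B j).hasCompactSupport_normed).convolution _ hc
  · intro x
    exact integral_nonneg fun t => mul_nonneg ((B j).nonneg_normed t) (h0 _)
  · rw [← dist_zero_right]
    exact (dist_convolution_le hM10 (B j).support_normed_eq.subset (B j).nonneg_normed
      (B j).integral_normed hφ.continuous.aestronglyMeasurable
      (fun y _ => by rw [dist_zero_right]; exact hM₁ y)).trans (le_max_left _ _)
  · rw [hfd, ← dist_zero_right]
    exact (dist_convolution_le hM20 (B j).support_normed_eq.subset (B j).nonneg_normed
      (B j).integral_normed hd.aestronglyMeasurable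
      (fun y _ => by rw [dist_zero_right]; exact hM₂ y)).trans (le_max_right _ _)
  · have hx0 := hz x (hball j x hx x (mem_ball_self (B j).rOut_pos))
    have := (B j).normed_convolution_eq_right (μ := volume) (g := φ) (x₀ := x)
      (fun y hy => by rw [hx0.1, (hz y (hball j x hx y hy)).1])
    rw [hx0.1] at this
    exact this
  · have hx0 := hz x (hball j x hx x (mem_ball_self (B j).rOut_pos))
    have := (B j).normed_convolution_eq_right (μ := volume) (g := fderiv ℝ φ) (x₀ := x)
      (fun y hy => by rw [hx0.2, (hz y (hball j x hx y hy)).2])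
    rw [hx0.2] at this
    rw [hfd]
    exact this
  · exact ContDiffBump.convolution_tendsto_right_of_continuous hBt hφ.continuous x
  · simp_rw [hfd]
    exact ContDiffBump.convolution_tendsto_right_of_continuous hBt hd x

lemma norm_gradient_eq {n : ℕ} (u : Euc n → ℝ) (x : Euc n) :
    ‖gradient u x‖ = ‖fderiv ℝ u x‖ := by
  simp [gradient]

lemma continuous_gradient' {n : ℕ} {u : Euc n → ℝ} (hu : ContDiff ℝ 1 u) :
    Continuous (gradient u) := by
  have hd : Continuous (fderiv ℝ u) := hu.continuous_fderiv one_ne_zero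
  exact (InnerProductSpace.toDual ℝ (Euc n)).symm.continuous.comp hd

open scoped Topology in
/-- The weak inequality extends to `C¹` test functions. -/
lemma weak_C1 {n : ℕ} {p C₁ C₂ α : ℝ} (hp : 1 < p) (hC₂ : 0 < C₂) (hα : 0 < α)
    {A : Euc n → Euc n → Euc n} (hA : StructCond A p C₁ C₂)
    {b : Euc n → ℝ} (hbm : Measurable b) (hb0 : ∀ x, 0 ≤ b x) (hbloc : LocBdd b)
    {u : Euc n → ℝ} (hu : ContDiff ℝ 1 u)
    (hsol : IsWeakSol A b α (fun _ => 0) Set.univ u)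
    (φ : Euc n → ℝ) (hφ : ContDiff ℝ 1 φ) (hc : HasCompactSupport φ) (h0 : ∀ x, 0 ≤ φ x) :
    ∫ x, fderiv ℝ φ x (A x (gradient u x)) ≤ ∫ x, b x * ‖gradient u x‖ ^ α * φ x := by
  obtain ⟨ψ, R, M, h1, h2, h3, h4, h5⟩ := exists_mollify φ hφ hc h0
  have hg := continuous_gradient' hu
  have hK := isCompact_closedBall (0 : Euc n) R
  obtain ⟨G, hG⟩ := hK.exists_bound_of_continuousOn hg.continuousOn
  obtain ⟨B, hB⟩ := hbloc _ hK
  have hAm : Measurable (fun x => A x (gradient u x)) :=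
    hA.1.comp (measurable_id.prodMk hg.measurable)
  have hbd : ∀ c : ℝ, Integrable ((Metric.closedBall (0 : Euc n) R).indicator (fun _ => c)) := by
    intro c
    rw [integrable_indicator_iff measurableSet_closedBall]
    exact integrableOn_const hK.measure_lt_top.ne
  have hdm : ∀ χ : Euc n → ℝ, ContDiff ℝ 1 χ → AEStronglyMeasurable
      (fun x => fderiv ℝ χ x (A x (gradient u x))) volume := by
    intro χ hχ
    have h : Continuous (fun q : (Euc n →L[ℝ] ℝ) × Euc n => q.1 q.2) := by fun_prop
    exact (h.measurable.comp
      ((hχ.continuous_fderiv one_ne_zero).measurable.prodMk hAm)).aestronglyMeasurable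
  have t1 : Tendsto (fun j => ∫ x, fderiv ℝ (ψ j) x (A x (gradient u x))) atTop
      (𝓝 (∫ x, fderiv ℝ φ x (A x (gradient u x)))) := by
    refine tendsto_integral_of_dominated_convergence
      ((Metric.closedBall (0 : Euc n) R).indicator (fun _ => M * (C₂ * G ^ (p - 1))))
      (fun j => hdm _ ((h1 j).1.of_le (by exact_mod_cast le_top))) (hbd _) (fun j => ?_) ?_
    · refine Eventually.of_forall fun x => ?_
      by_cases hx : x ∈ Metric.closedBall (0 : Euc n) R
      · rw [indicator_of_mem hx]
        refine (ContinuousLinearMap.le_opNorm _ _).trans ?_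
        have hM : 0 ≤ M := (norm_nonneg _).trans (h2 j x).1
        refine mul_le_mul (h2 j x).2 ((hA.2 x _).2.trans ?_) (norm_nonneg _) hM
        refine mul_le_mul_of_nonneg_left ?_ hC₂.le
        exact Real.rpow_le_rpow (norm_nonneg _) (hG x hx) (by linarith)
      · simp [indicator_of_notMem hx, (h3 j x hx).2]
    · refine Eventually.of_forall fun x => ?_
      exact ((ContinuousLinearMap.apply ℝ ℝ (A x (gradient u x))).continuous.tendsto _).comp (h5 x)
  have t2 : Tendsto (fun j => ∫ x, b x * ‖gradient u x‖ ^ α * ψ j x) atTop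
      (𝓝 (∫ x, b x * ‖gradient u x‖ ^ α * φ x)) := by
    refine tendsto_integral_of_dominated_convergence
      ((Metric.closedBall (0 : Euc n) R).indicator (fun _ => B * G ^ α * M))
      (fun j => ?_) (hbd _) (fun j => ?_) ?_
    · exact ((hbm.mul (hg.norm.measurable.pow_const α)).mul
        (h1 j).1.continuous.measurable).aestronglyMeasurable
    · refine Eventually.of_forall fun x => ?_
      by_cases hx : x ∈ Metric.closedBall (0 : Euc n) R
      · rw [indicator_of_mem hx, norm_mul, norm_mul]
        have hb := hB x hx
        have := hb0 x
        have hG0 : 0 ≤ G := (norm_nonneg _).trans (hG x hx)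
        rw [Real.norm_of_nonneg (hb0 x), Real.norm_of_nonneg (Real.rpow_nonneg (norm_nonneg _) _)]
        have e1 := Real.rpow_le_rpow (norm_nonneg _) (hG x hx) hα.le
        have e2 := (h2 j x).1
        have e3 : 0 ≤ G ^ α := by positivity
        have e4 : 0 ≤ B := this.trans hb
        gcongr
      · simp [indicator_of_notMem hx, (h3 j x hx).1]
    · exact Eventually.of_forall fun x => (h4 x).const_mul _
  refine le_of_tendsto_of_tendsto' t1 t2 fun j => ?_
  have := hsol (ψ j) (h1 j).1 (h1 j).2.1 (subset_univ _) (h1 j).2.2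
  simp only [zero_mul, integral_zero, Measure.restrict_univ] at this
  have e : ∀ x, ⟪A x (gradient u x), gradient (ψ j) x⟫ =
      fderiv ℝ (ψ j) x (A x (gradient u x)) := by
    intro x
    rw [inner_gradient_right]; simp
  simp_rw [e] at this
  linarith

lemma hasDerivAt_max_rpow {q : ℝ} (hq : 1 < q) (t : ℝ) :
    HasDerivAt (fun s : ℝ => max s 0 ^ q) (q * max t 0 ^ (q - 1)) t := by
  have hq0 : q ≠ 0 := by linarith
  have hq1 : q - 1 ≠ 0 := by linarith
  rcases lt_trichotomy t 0 with ht | ht | ht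
  · rw [max_eq_right ht.le, Real.zero_rpow hq1, mul_zero]
    refine (hasDerivAt_const t (0 : ℝ)).congr_of_eventuallyEq ?_
    filter_upwards [Iio_mem_nhds ht] with s hs
    rw [max_eq_right (le_of_lt hs), Real.zero_rpow hq0]
  · subst ht
    have h1 : HasDerivWithinAt (fun s : ℝ => max s 0 ^ q) (q * max 0 0 ^ (q - 1)) (Iic 0) 0 := by
      rw [max_self, Real.zero_rpow hq1, mul_zero]
      refine (hasDerivWithinAt_const (0 : ℝ) (Iic 0) (0 : ℝ)).congr ?_ ?_
      · intro s hs
        rw [max_eq_right hs, Real.zero_rpow hq0]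
      · simp [hq0]
    have h2 : HasDerivWithinAt (fun s : ℝ => max s 0 ^ q) (q * max 0 0 ^ (q - 1)) (Ici 0) 0 := by
      rw [max_self]
      refine (Real.hasDerivAt_rpow_const (Or.inr hq.le)).hasDerivWithinAt.congr ?_ ?_
      · intro s hs
        rw [max_eq_left hs]
      · simp
    have := h1.union h2
    rwa [Iic_union_Ici, hasDerivWithinAt_univ] at this
  · rw [max_eq_left ht.le]
    refine (Real.hasDerivAt_rpow_const (Or.inr hq.le)).congr_of_eventuallyEq ?_
    filter_upwards [Ioi_mem_nhds ht] with s hs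
    rw [max_eq_left (le_of_lt hs)]

/-- The truncation `(u - k)⁺` inside the ball of radius `r`, extended by zero. -/
def trunc {n : ℕ} (u : Euc n → ℝ) (r k : ℝ) (x : Euc n) : ℝ :=
  if ‖x‖ < r then max (u x - k) 0 else 0

section
variable {n : ℕ} {u : Euc n → ℝ} {r k : ℝ}

lemma trunc_nonneg (x : Euc n) : 0 ≤ trunc u r k x := by
  unfold trunc; split_ifs <;> simp

lemma trunc_local (hu : Continuous u) (hk : ∀ x, ‖x‖ = r → u x < k) (x : Euc n) :
    (‖x‖ < r ∧ ∀ᶠ y in nhds x, trunc u r k y = max (u y - k) 0) ∨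
    (trunc u r k x = 0 ∧ ∀ᶠ y in nhds x, trunc u r k y = 0) := by
  rcases lt_trichotomy ‖x‖ r with h | h | h
  · left
    refine ⟨h, ?_⟩
    filter_upwards [continuous_norm.continuousAt.eventually_lt_const h] with y hy
    simp [trunc, hy]
  · right
    refine ⟨by simp [trunc, h], ?_⟩
    filter_upwards [hu.continuousAt.eventually_lt_const (hk x h)] with y hy
    unfold trunc
    split_ifs
    · exact max_eq_right (by linarith)
    · rfl
  · right
    refine ⟨by simp [trunc, h.le], ?_⟩
    filter_upwards [continuous_norm.continuousAt.eventually_const_lt h] with y hy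
    simp [trunc, (le_of_lt hy)]

lemma continuous_trunc (hu : Continuous u) (hk : ∀ x, ‖x‖ = r → u x < k) :
    Continuous (trunc u r k) := by
  rw [continuous_iff_continuousAt]
  intro x
  rcases trunc_local hu hk x with ⟨-, h⟩ | ⟨-, h⟩
  · exact ContinuousAt.congr (by fun_prop) (EventuallyEq.symm h)
  · exact (continuousAt_const (y := (0 : ℝ))).congr (EventuallyEq.symm h)

lemma trunc_hasCompactSupport : HasCompactSupport (trunc u r k) := by
  refine HasCompactSupport.of_support_subset_isCompact (isCompact_closedBall (0 : Euc n) r) ?_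
  intro x hx
  by_contra h
  simp at h
  exact hx (by simp [trunc, h.le])

lemma trunc_rpow_hasCompactSupport {q : ℝ} (hq : q ≠ 0) :
    HasCompactSupport (fun x => trunc u r k x ^ q) :=
  (trunc_hasCompactSupport (u := u) (r := r) (k := k)).comp_left (g := fun t : ℝ => t ^ q)
    (Real.zero_rpow hq)

lemma trunc_hasFDerivAt (hu : ContDiff ℝ 1 u) (hk : ∀ x, ‖x‖ = r → u x < k) {q : ℝ} (hq : 1 < q)
    (x : Euc n) : HasFDerivAt (fun y => trunc u r k y ^ q)
      ((q * trunc u r k x ^ (q - 1)) • fderiv ℝ u x) x := by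
  have hq0 : q ≠ 0 := by linarith
  have hq1 : q - 1 ≠ 0 := by linarith
  rcases trunc_local hu.continuous hk x with ⟨-, h⟩ | ⟨h0, h⟩
  · have hux : HasFDerivAt (fun y => u y - k) (fderiv ℝ u x) x :=
      ((hu.differentiable one_ne_zero) x).hasFDerivAt.sub_const k
    have := (hasDerivAt_max_rpow hq (u x - k)).comp_hasFDerivAt x hux
    rw [h.self_of_nhds]
    refine this.congr_of_eventuallyEq ?_
    filter_upwards [h] with y hy
    simp [hy]
  · rw [h0, Real.zero_rpow hq1, mul_zero, zero_smul]
    refine (hasFDerivAt_const (0 : ℝ) x).congr_of_eventuallyEq ?_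
    filter_upwards [h] with y hy
    rw [hy, Real.zero_rpow hq0]

lemma trunc_contDiff (hu : ContDiff ℝ 1 u) (hk : ∀ x, ‖x‖ = r → u x < k) {q : ℝ} (hq : 1 < q) :
    ContDiff ℝ 1 (fun y => trunc u r k y ^ q) := by
  rw [contDiff_one_iff_fderiv]
  refine ⟨fun x => (trunc_hasFDerivAt hu hk hq x).differentiableAt, ?_⟩
  have : fderiv ℝ (fun y => trunc u r k y ^ q) =
      fun x => (q * trunc u r k x ^ (q - 1)) • fderiv ℝ u x :=
    funext fun x => (trunc_hasFDerivAt hu hk hq x).fderiv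
  rw [this]
  have hd : Continuous (fderiv ℝ u) := hu.continuous_fderiv one_ne_zero
  have hw := continuous_trunc hu.continuous hk
  exact (continuous_const.mul (hw.rpow_const fun x => Or.inr (by linarith))).smul hd
end

lemma elem_young {p ε a w : ℝ} (hp : 1 < p) (hε : 0 < ε) (ha : 0 < a) (hw : 0 ≤ w) :
    w * a ^ (p - 1) ≤ ε * a ^ p + (ε⁻¹) ^ (p - 1) * w ^ p := by
  have e1 : a ^ p = a * a ^ (p - 1) := by
    rw [← Real.rpow_one_add' ha.le (by linarith)]; congr 1; ring
  have e2 : w ^ p = w * w ^ (p - 1) := by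
    rw [← Real.rpow_one_add' hw (by linarith)]; congr 1; ring
  rcases le_total w (ε * a) with h | h
  · have : 0 ≤ (ε⁻¹) ^ (p - 1) * w ^ p := by positivity
    have h2 : w * a ^ (p - 1) ≤ (ε * a) * a ^ (p - 1) := by gcongr
    rw [e1]; nlinarith
  · have h1 : a ≤ ε⁻¹ * w := by
      rw [inv_mul_eq_div, le_div_iff₀ hε]; linarith
    have h2 : a ^ (p - 1) ≤ (ε⁻¹ * w) ^ (p - 1) := Real.rpow_le_rpow ha.le h1 (by linarith)
    rw [Real.mul_rpow (by positivity) hw] at h2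
    have h3 : w * a ^ (p - 1) ≤ w * ((ε⁻¹) ^ (p - 1) * w ^ (p - 1)) := by gcongr
    have : 0 ≤ ε * a ^ p := by positivity
    rw [e2]; nlinarith

lemma elem_young2 {p a w : ℝ} (hp : 1 < p) (ha : 0 ≤ a) (hw : 0 ≤ w) :
    w ^ (p - 1) * a ≤ w ^ p + a ^ p := by
  have e1 : a ^ p = a ^ (p - 1) * a := by
    rw [← Real.rpow_add_one' ha (by linarith)]; congr 1; ring
  have e2 : w ^ p = w ^ (p - 1) * w := by
    rw [← Real.rpow_add_one' hw (by linarith)]; congr 1; ring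
  rcases le_total w a with h | h
  · have : w ^ (p - 1) ≤ a ^ (p - 1) := Real.rpow_le_rpow hw h (by linarith)
    have : w ^ (p - 1) * a ≤ a ^ (p - 1) * a := by gcongr
    have : 0 ≤ w ^ p := by positivity
    linarith
  · have : w ^ (p - 1) * a ≤ w ^ (p - 1) * w := by gcongr
    have : 0 ≤ a ^ p := by positivity
    linarith

/-- The set where `u > k` in the ball and the gradient does not vanish. -/
def Eset {n : ℕ} (u : Euc n → ℝ) (r k : ℝ) : Set (Euc n) :=
  {x | ‖x‖ < r ∧ k < u x ∧ fderiv ℝ u x ≠ 0}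

lemma isOpen_Eset {n : ℕ} {u : Euc n → ℝ} (hu : ContDiff ℝ 1 u) (r k : ℝ) :
    IsOpen (Eset u r k) := by
  have hd : Continuous (fderiv ℝ u) := hu.continuous_fderiv one_ne_zero
  exact (isOpen_lt continuous_norm continuous_const).inter
    ((isOpen_lt continuous_const hu.continuous).inter (isOpen_ne_fun hd continuous_const))

lemma trunc_zero_or {n : ℕ} (u : Euc n → ℝ) (r k : ℝ) (x : Euc n) :
    trunc u r k x = 0 ∨ fderiv ℝ u x = 0 ∨ x ∈ Eset u r k := by
  unfold trunc Eset
  by_cases h1 : ‖x‖ < r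
  · by_cases h2 : k < u x
    · by_cases h3 : fderiv ℝ u x = 0
      · exact Or.inr (Or.inl h3)
      · exact Or.inr (Or.inr ⟨h1, h2, h3⟩)
    · left; rw [if_pos h1]; exact max_eq_right (by linarith)
  · left; rw [if_neg h1]

/-- Energy estimate. -/
lemma energy {n : ℕ} {p C₁ C₂ α : ℝ} (hp : 1 < p) (hC₁ : 0 < C₁) (hC₂ : 0 < C₂) (hα : 0 < α)
    {A : Euc n → Euc n → Euc n} (hA : StructCond A p C₁ C₂)
    {b : Euc n → ℝ} (hbm : Measurable b) (hb0 : ∀ x, 0 ≤ b x) (hbloc : LocBdd b)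
    {u : Euc n → ℝ} (hu : ContDiff ℝ 1 u)
    (hsol : IsWeakSol A b α (fun _ => 0) Set.univ u) {r k B : ℝ} (hB0 : 0 ≤ B)
    (hB : ∀ x, ‖x‖ < r → b x * ‖gradient u x‖ ^ α ≤ B * ‖fderiv ℝ u x‖ ^ (p - 1))
    (hk : ∀ x, ‖x‖ = r → u x < k) :
    ∫ x, ‖fderiv ℝ (fun y => trunc u r k y ^ (p + 1)) x‖ ≤
      ((p + 1) * (1 + B * ((C₁ / (B + 1))⁻¹) ^ (p - 1) / C₁)) *
        ∫ x in Eset u r k, trunc u r k x ^ (p + 1) := by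
  set w := trunc u r k with hw
  set E := Eset u r k with hE
  have hEm : MeasurableSet E := (isOpen_Eset hu r k).measurableSet
  have hwc : Continuous w := continuous_trunc hu.continuous hk
  have hwcs : HasCompactSupport w := trunc_hasCompactSupport
  have hw0 : ∀ x, 0 ≤ w x := trunc_nonneg
  have hd : Continuous (fderiv ℝ u) := hu.continuous_fderiv one_ne_zero
  have hp0 : 0 < p := by linarith
  set ε := C₁ / (B + 1) with hε
  have hε0 : 0 < ε := by positivity
  have hBε : B * ε ≤ C₁ := by
    rw [hε, mul_div_assoc', div_le_iff₀ (by positivity)]; nlinarith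
  set D := (ε⁻¹) ^ (p - 1) with hD
  have hD0 : 0 ≤ D := by positivity
  -- integrability
  have i1 : Integrable (fun x => w x * ‖fderiv ℝ u x‖ ^ p) :=
    (hwc.mul (hd.norm.rpow_const fun x => Or.inr hp0.le)).integrable_of_hasCompactSupport
      hwcs.mul_right
  have i2 : Integrable (fun x => w x ^ (p + 1)) :=
    (hwc.rpow_const fun x => Or.inr (by linarith)).integrable_of_hasCompactSupport
      (trunc_rpow_hasCompactSupport (by linarith))
  have i3 : Integrable (E.indicator fun x => w x ^ (p + 1)) := i2.indicator hEm
  -- weak inequality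
  have hweak := weak_C1 hp hC₂ hα hA hbm hb0 hbloc hu hsol (fun x => w x ^ (2 : ℝ))
    (trunc_contDiff hu hk (by norm_num)) (trunc_rpow_hasCompactSupport (by norm_num))
    (fun x => Real.rpow_nonneg (hw0 x) _)
  have hfd2 : ∀ x, fderiv ℝ (fun y => w y ^ (2 : ℝ)) x (A x (gradient u x)) =
      2 * w x * fderiv ℝ u x (A x (gradient u x)) := by
    intro x
    rw [(trunc_hasFDerivAt hu hk (by norm_num : (1 : ℝ) < 2) x).fderiv]
    norm_num [hw]
  have hco : ∀ x, C₁ * ‖fderiv ℝ u x‖ ^ p ≤ fderiv ℝ u x (A x (gradient u x)) := by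
    intro x
    have := (hA.2 x (gradient u x)).1
    rwa [norm_gradient_eq, inner_gradient_left] at this
  have hgr : ∀ x, |fderiv ℝ u x (A x (gradient u x))| ≤ C₂ * ‖fderiv ℝ u x‖ ^ p := by
    intro x
    have h1 := (fderiv ℝ u x).le_opNorm (A x (gradient u x))
    have h2 := (hA.2 x (gradient u x)).2
    rw [norm_gradient_eq] at h2
    have e1 : ‖fderiv ℝ u x‖ ^ p = ‖fderiv ℝ u x‖ * ‖fderiv ℝ u x‖ ^ (p - 1) := by
      rw [← Real.rpow_one_add' (norm_nonneg _) (by linarith)]; congr 1; ring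
    rw [e1]
    have h3 : ‖fderiv ℝ u x‖ * ‖A x (gradient u x)‖ ≤
      ‖fderiv ℝ u x‖ * (C₂ * ‖fderiv ℝ u x‖ ^ (p - 1)) := by gcongr
    rw [Real.norm_eq_abs] at h1
    linarith
  have hAm : Measurable (fun x => A x (gradient u x)) :=
    hA.1.comp (measurable_id.prodMk (continuous_gradient' hu).measurable)
  have i4 : Integrable (fun x => 2 * w x * fderiv ℝ u x (A x (gradient u x))) := by
    refine (i1.const_mul (2 * C₂)).mono' ?_ (Eventually.of_forall fun x => ?_)
    · have h : Continuous (fun q : (Euc n →L[ℝ] ℝ) × Euc n => q.1 q.2) := by fun_prop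
      exact ((hwc.measurable.const_mul 2).mul
        (h.measurable.comp (hd.measurable.prodMk hAm))).aestronglyMeasurable
    · rw [norm_mul, Real.norm_of_nonneg (by have := hw0 x; positivity), Real.norm_eq_abs]
      have := mul_le_mul_of_nonneg_left (hgr x) (by have := hw0 x; positivity : 0 ≤ 2 * w x)
      linarith
  have hptw : ∀ x, b x * ‖gradient u x‖ ^ α * w x ^ (2 : ℝ) ≤
      C₁ * (w x * ‖fderiv ℝ u x‖ ^ p) + (B * D) * E.indicator (fun x => w x ^ (p + 1)) x := by
    intro x
    have hI : 0 ≤ E.indicator (fun x => w x ^ (p + 1)) x :=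
      indicator_nonneg (fun x _ => Real.rpow_nonneg (hw0 x) _) x
    have hR : 0 ≤ C₁ * (w x * ‖fderiv ℝ u x‖ ^ p) +
        (B * D) * E.indicator (fun x => w x ^ (p + 1)) x := by
      have := hw0 x
      positivity
    rcases trunc_zero_or u r k x with h | h | h
    · refine le_trans (le_of_eq ?_) hR
      rw [show w x = 0 from h, Real.zero_rpow (by norm_num), mul_zero]
    · refine le_trans (le_of_eq ?_) hR
      rw [norm_gradient_eq, h, norm_zero, Real.zero_rpow hα.ne', mul_zero, zero_mul]
    · rw [indicator_of_mem h]
      have ha : 0 < ‖fderiv ℝ u x‖ := norm_pos_iff.2 h.2.2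
      have hy := elem_young hp hε0 ha (hw0 x)
      have hb := hB x h.1
      have e1 : w x ^ (p + 1) = w x * w x ^ p := by
        rw [← Real.rpow_one_add' (hw0 x) (by linarith)]; congr 1; ring
      have e2 : w x ^ (2 : ℝ) = w x * w x := by
        rw [Real.rpow_two]; ring
      rw [e1, e2]
      calc b x * ‖gradient u x‖ ^ α * (w x * w x)
          ≤ B * ‖fderiv ℝ u x‖ ^ (p - 1) * (w x * w x) :=
            mul_le_mul_of_nonneg_right hb (mul_self_nonneg _)
        _ = (B * w x) * (w x * ‖fderiv ℝ u x‖ ^ (p - 1)) := by ring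
        _ ≤ (B * w x) * (ε * ‖fderiv ℝ u x‖ ^ p + D * w x ^ p) :=
            mul_le_mul_of_nonneg_left hy (mul_nonneg hB0 (hw0 x))
        _ = (B * ε) * (w x * ‖fderiv ℝ u x‖ ^ p) + B * D * (w x * w x ^ p) := by ring
        _ ≤ C₁ * (w x * ‖fderiv ℝ u x‖ ^ p) + B * D * (w x * w x ^ p) := by
            have := hw0 x
            gcongr
  have hRint := (i1.const_mul C₁).add (i3.const_mul (B * D))
  have s1 : 2 * C₁ * ∫ x, w x * ‖fderiv ℝ u x‖ ^ p ≤
      ∫ x, 2 * w x * fderiv ℝ u x (A x (gradient u x)) := by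
    rw [← integral_const_mul]
    refine integral_mono (i1.const_mul _) i4 fun x => ?_
    have := mul_le_mul_of_nonneg_left (hco x) (by have := hw0 x; positivity : 0 ≤ 2 * w x)
    simp only
    linarith
  have s2 : ∫ x, b x * ‖gradient u x‖ ^ α * w x ^ (2 : ℝ) ≤
      C₁ * (∫ x, w x * ‖fderiv ℝ u x‖ ^ p) + (B * D) * ∫ x in E, w x ^ (p + 1) := by
    rw [← integral_indicator hEm, ← integral_const_mul, ← integral_const_mul,
      ← integral_add (i1.const_mul C₁) (i3.const_mul (B * D))]
    refine integral_mono_of_nonneg (Eventually.of_forall fun x => ?_) hRint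
      (Eventually.of_forall hptw)
    exact mul_nonneg (mul_nonneg (hb0 x) (Real.rpow_nonneg (norm_nonneg _) _))
      (Real.rpow_nonneg (hw0 x) _)
  simp_rw [hfd2] at hweak
  set X := ∫ x, w x * ‖fderiv ℝ u x‖ ^ p
  set I := ∫ x in E, w x ^ (p + 1) with hI
  have s3 : X ≤ B * D / C₁ * I := by
    rw [div_mul_eq_mul_div, le_div_iff₀ hC₁]; nlinarith
  have s4 : ∫ x, ‖fderiv ℝ (fun y => w y ^ (p + 1)) x‖ ≤ (p + 1) * (I + X) := by
    rw [hI, ← integral_indicator hEm, ← integral_add i3 i1, ← integral_const_mul]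
    refine integral_mono_of_nonneg (Eventually.of_forall fun x => norm_nonneg _)
      ((i3.add i1).const_mul _) (Eventually.of_forall fun x => ?_)
    simp only
    rw [(trunc_hasFDerivAt hu hk (by linarith : (1 : ℝ) < p + 1) x).fderiv, norm_smul,
      Real.norm_of_nonneg (by have := hw0 x; positivity), mul_assoc]
    refine mul_le_mul_of_nonneg_left ?_ (by linarith)
    have hI : 0 ≤ E.indicator (fun x => w x ^ (p + 1)) x :=
      indicator_nonneg (fun x _ => Real.rpow_nonneg (hw0 x) _) x
    have hR : 0 ≤ E.indicator (fun x => w x ^ (p + 1)) x + w x * ‖fderiv ℝ u x‖ ^ p := by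
      have := hw0 x
      positivity
    rcases trunc_zero_or u r k x with h | h | h
    · rw [h, Real.zero_rpow (by linarith), zero_mul]
      exact hR
    · refine le_trans (le_of_eq ?_) hR
      rw [h, norm_zero, mul_zero]
    · rw [indicator_of_mem h]
      have hy := elem_young2 hp (norm_nonneg (fderiv ℝ u x)) (hw0 x)
      have e1 : w x ^ (p + 1) = w x * w x ^ p := by
        rw [← Real.rpow_one_add' (hw0 x) (by linarith)]; congr 1; ring
      have e2 : w x ^ (p + 1 - 1) = w x * w x ^ (p - 1) := by
        rw [← Real.rpow_one_add' (hw0 x) (by linarith)]; congr 1; ring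
      rw [← hw, e1, e2]
      have := mul_le_mul_of_nonneg_left hy (hw0 x)
      linarith
  refine s4.trans ?_
  rw [mul_assoc]
  refine mul_le_mul_of_nonneg_left ?_ (by linarith)
  linarith

lemma holderConj_dim {n : ℕ} (hn : 2 ≤ n) :
    Real.HolderConjugate (Module.finrank ℝ (Euc n)) (Real.conjExponent n) := by
  rw [finrank_euclideanSpace_fin]
  refine Real.HolderConjugate.conjExponent ?_
  exact_mod_cast (by omega : 1 < n)

/-- Sobolev's inequality together with the energy estimate bounds the measure of the set
where `u > k` and `Du ≠ 0` from below. -/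
lemma measure_lower {n : ℕ} (hn : 2 ≤ n) {p L : ℝ} (hp : 1 < p) {u : Euc n → ℝ}
    (hu : ContDiff ℝ 1 u) {r k : ℝ}
    (hk : ∀ x, ‖x‖ = r → u x < k) {x₀ : Euc n} (hx₀ : ‖x₀‖ < r) (hkx : k < u x₀) (hL : 0 ≤ L)
    (hen : ∫ x, ‖fderiv ℝ (fun y => trunc u r k y ^ (p + 1)) x‖ ≤
      L * ∫ x in Eset u r k, trunc u r k x ^ (p + 1)) :
    1 ≤ volume (Eset u r k) ^ (1 / (n : ℝ)) *
      ((lintegralPowLePowLIntegralFDerivConst (volume : Measure (Euc n))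
        (Real.conjExponent n) : ℝ≥0∞) ^ (1 / Real.conjExponent n) * ENNReal.ofReal L) := by
  set z : Euc n → ℝ := fun y => trunc u r k y ^ (p + 1) with hz
  set E := Eset u r k with hE
  set q := Real.conjExponent n with hq
  set C : ℝ≥0∞ := (lintegralPowLePowLIntegralFDerivConst (volume : Measure (Euc n)) q : ℝ≥0∞)
  have hconj := holderConj_dim hn
  have hconj' : Real.HolderConjugate (n : ℝ) q := by
    have := hconj
    rwa [finrank_euclideanSpace_fin] at this
  have hq0 : 0 < q := hconj'.symm.pos
  have hzC : ContDiff ℝ 1 z := trunc_contDiff hu hk (by linarith)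
  have hzs : HasCompactSupport z := trunc_rpow_hasCompactSupport (by linarith)
  have hz0 : ∀ x, 0 ≤ z x := fun x => Real.rpow_nonneg (trunc_nonneg x) _
  have hzi : Integrable z := hzC.continuous.integrable_of_hasCompactSupport hzs
  have hdi : Integrable (fderiv ℝ z) :=
    (hzC.continuous_fderiv one_ne_zero).integrable_of_hasCompactSupport (hzs.fderiv ℝ)
  have hgns := lintegral_pow_le_pow_lintegral_fderiv (volume : Measure (Euc n)) hzC hzs hconj
  set J : ℝ≥0∞ := ∫⁻ x in E, ‖z x‖ₑ with hJ
  have hJt : J ≠ ⊤ := (hzi.integrableOn (s := E)).2.ne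
  have hG : ∫⁻ x, ‖fderiv ℝ z x‖ₑ ≤ ENNReal.ofReal L * J := by
    rw [← ofReal_integral_norm_eq_lintegral_enorm hdi, hJ,
      ← ofReal_integral_norm_eq_lintegral_enorm hzi.integrableOn, ← ENNReal.ofReal_mul hL]
    refine ENNReal.ofReal_le_ofReal (hen.trans (le_of_eq ?_))
    congr 1
    refine integral_congr_ae (Eventually.of_forall fun x => ?_)
    exact (Real.norm_of_nonneg (hz0 x)).symm
  have hgns2 : ∫⁻ x, ‖z x‖ₑ ^ q ≤ C * (ENNReal.ofReal L * J) ^ q :=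
    hgns.trans (by gcongr)
  have hJ0 : J ≠ 0 := by
    intro h0
    rw [h0, mul_zero, ENNReal.zero_rpow_of_pos hq0, mul_zero] at hgns2
    have h1 : ∫⁻ x, ‖z x‖ₑ ^ q = 0 := le_antisymm hgns2 (zero_le)
    have hm : Measurable (fun x => ‖z x‖ₑ ^ q) :=
      (hzC.continuous.measurable.enorm).pow_const q
    rw [lintegral_eq_zero_iff hm] at h1
    have h2 : z =ᵐ[volume] fun _ => 0 := by
      filter_upwards [h1] with x hx
      simpa [hq0, hq0.le, hq0.ne', not_lt.2 hq0.le] using hx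
    have h3 := (hzC.continuous.ae_eq_iff_eq volume continuous_const).1 h2
    have h4 : 0 < z x₀ := by
      refine Real.rpow_pos_of_pos ?_ _
      simp [trunc, hx₀, hkx]
    rw [h3] at h4
    exact lt_irrefl _ h4
  have hH := ENNReal.lintegral_mul_le_Lp_mul_Lq (volume.restrict E) hconj'
    (f := fun _ => 1) (g := fun x => ‖z x‖ₑ) aemeasurable_const
    (hzC.continuous.measurable.enorm).aemeasurable
  have hfin : J ≤ volume E ^ (1 / (n : ℝ)) * (C ^ (1 / q) * ENNReal.ofReal L) * J := by
    calc J = ∫⁻ x in E, ((fun _ => (1 : ℝ≥0∞)) * fun x => ‖z x‖ₑ : Euc n → ℝ≥0∞) x := by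
          simp [hJ]
      _ ≤ _ := hH
      _ ≤ volume E ^ (1 / (n : ℝ)) * (C * (ENNReal.ofReal L * J) ^ q) ^ (1 / q) := by
        simp only [ENNReal.one_rpow, lintegral_const, one_mul, Measure.restrict_apply_univ]
        gcongr
        exact (setLIntegral_le_lintegral _ _).trans hgns2
      _ = _ := by
        rw [ENNReal.mul_rpow_of_nonneg _ _ (by positivity), ← ENNReal.rpow_mul,
          mul_one_div_cancel hq0.ne', ENNReal.rpow_one]
        ring
  by_contra! hlt
  have := ENNReal.mul_lt_mul_left hJ0 hJt hlt
  rw [one_mul] at this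
  exact absurd hfin (not_le.2 this)

lemma no_interior_max (n : ℕ) (hn : 2 ≤ n) (p C₁ C₂ α : ℝ) (hp : 1 < p)
    (hC₁ : 0 < C₁) (hC₂ : 0 < C₂) (hα₁ : p - 1 ≤ α)
    (A : Euc n → Euc n → Euc n) (hA : StructCond A p C₁ C₂)
    (b : Euc n → ℝ) (hbm : Measurable b) (hb0 : ∀ x, 0 ≤ b x) (hbloc : LocBdd b)
    (u : Euc n → ℝ) (hu : ContDiff ℝ 1 u)
    (hsol : IsWeakSol A b α (fun _ => 0) Set.univ u)
    (r m : ℝ) (x₀ : Euc n) (hx₀ : ‖x₀‖ ≤ r) (hm : m < u x₀) (hs : ∀ y, ‖y‖ = r → u y ≤ m)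
    (hx : ∀ y, ‖y‖ ≤ r → u y ≤ u x₀) : False := by
  have hx₀' : ‖x₀‖ < r := lt_of_le_of_ne hx₀ fun h => by
    have := hs x₀ h
    linarith
  have hα : 0 < α := by linarith
  have hd : Continuous (fderiv ℝ u) := hu.continuous_fderiv one_ne_zero
  have hK := isCompact_closedBall (0 : Euc n) r
  obtain ⟨G, hG⟩ := hK.exists_bound_of_continuousOn hd.continuousOn
  obtain ⟨B₀, hB₀⟩ := hbloc _ hK
  have hx₀m : x₀ ∈ Metric.closedBall (0 : Euc n) r := by simpa using hx₀
  have hG0 : 0 ≤ G := (norm_nonneg _).trans (hG x₀ hx₀m)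
  have hB00 : 0 ≤ B₀ := (hb0 x₀).trans (hB₀ x₀ hx₀m)
  set B := B₀ * G ^ (α - (p - 1)) with hBdef
  have hB0 : 0 ≤ B := by positivity
  have hB : ∀ x, ‖x‖ < r → b x * ‖gradient u x‖ ^ α ≤ B * ‖fderiv ℝ u x‖ ^ (p - 1) := by
    intro x hxr
    have hxm : x ∈ Metric.closedBall (0 : Euc n) r := by simpa using hxr.le
    rw [norm_gradient_eq]
    have e : ‖fderiv ℝ u x‖ ^ α =
        ‖fderiv ℝ u x‖ ^ (α - (p - 1)) * ‖fderiv ℝ u x‖ ^ (p - 1) := by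
      rw [← Real.rpow_add' (norm_nonneg _) (by linarith)]; congr 1; ring
    rw [e, hBdef, ← mul_assoc]
    have h1 := Real.rpow_le_rpow (norm_nonneg _) (hG x hxm) (by linarith : 0 ≤ α - (p - 1))
    have h2 := hB₀ x hxm
    have := hb0 x
    gcongr
  set L := (p + 1) * (1 + B * ((C₁ / (B + 1))⁻¹) ^ (p - 1) / C₁) with hLdef
  have hL : 0 ≤ L := by positivity
  set c : ℝ≥0∞ := (lintegralPowLePowLIntegralFDerivConst (volume : Measure (Euc n))
        (Real.conjExponent n) : ℝ≥0∞) ^ (1 / Real.conjExponent n) * ENNReal.ofReal L with hc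
  have hct : c ≠ ⊤ := by
    have hconj : Real.HolderConjugate (n : ℝ) (Real.conjExponent n) := by
      have := holderConj_dim hn
      rwa [finrank_euclideanSpace_fin] at this
    have := hconj.symm.pos
    exact ENNReal.mul_ne_top (ENNReal.rpow_ne_top_of_nonneg (by positivity) ENNReal.coe_ne_top)
      ENNReal.ofReal_ne_top
  let κ : ℕ → ℝ := fun j => u x₀ - (u x₀ - m) / 2 * (1 / ((j : ℝ) + 1))
  have hκm : ∀ j, m < κ j := by
    intro j
    have h1 : 1 / ((j : ℝ) + 1) ≤ 1 := by
      rw [div_le_one (by positivity)]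
      have : (0 : ℝ) ≤ j := Nat.cast_nonneg j
      linarith
    have : (u x₀ - m) / 2 * (1 / ((j : ℝ) + 1)) ≤ (u x₀ - m) / 2 * 1 :=
      mul_le_mul_of_nonneg_left h1 (by linarith)
    simp only [κ]
    linarith
  have hκM : ∀ j, κ j < u x₀ := by
    intro j
    have h0 : 0 < u x₀ - m := by linarith
    have : 0 < (u x₀ - m) / 2 * (1 / ((j : ℝ) + 1)) := by positivity
    simp only [κ]
    linarith
  have hκmono : Monotone κ := by
    intro i j hij
    have h0 : 0 ≤ (u x₀ - m) / 2 := by linarith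
    have : (i : ℝ) ≤ j := by exact_mod_cast hij
    simp only [κ]
    gcongr
  have hκt : Tendsto κ atTop (nhds (u x₀)) := by
    have := (tendsto_one_div_add_atTop_nhds_zero_nat (𝕜 := ℝ)).const_mul ((u x₀ - m) / 2)
    have := this.const_sub (u x₀)
    rw [mul_zero, sub_zero] at this
    exact this
  have hlow : ∀ j, 1 ≤ volume (Eset u r (κ j)) ^ (1 / (n : ℝ)) * c := by
    intro j
    have hk : ∀ x, ‖x‖ = r → u x < κ j := fun x h => (hs x h).trans_lt (hκm j)
    exact measure_lower hn hp hu hk hx₀' (hκM j) hL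
      (energy hp hC₁ hC₂ hα hA hbm hb0 hbloc hu hsol hB0 hB hk)
  have hempty : ⋂ j, Eset u r (κ j) = ∅ := by
    rw [eq_empty_iff_forall_notMem]
    intro x hxE
    rw [mem_iInter] at hxE
    have hxr : ‖x‖ < r := (hxE 0).1
    have h1 : u x₀ ≤ u x := le_of_tendsto' hκt fun j => (hxE j).2.1.le
    refine (hxE 0).2.2 ?_
    refine IsLocalMax.fderiv_eq_zero ?_
    filter_upwards [continuous_norm.continuousAt.eventually_lt_const hxr] with y hy
    exact (hx y (le_of_lt hy)).trans h1
  have hmt : Tendsto (fun j => volume (Eset u r (κ j))) atTop (nhds 0) := by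
    have := tendsto_measure_iInter_atTop (μ := (volume : Measure (Euc n)))
      (s := fun j => Eset u r (κ j))
      (fun j => (isOpen_Eset hu r (κ j)).measurableSet.nullMeasurableSet)
      (fun i j hij x hxE => ⟨hxE.1, (hκmono hij).trans_lt hxE.2.1, hxE.2.2⟩)
      ⟨0, ne_top_of_le_ne_top hK.measure_lt_top.ne
        (measure_mono fun x hxE => by simpa using hxE.1.le)⟩
    rw [hempty, measure_empty] at this
    exact this
  have hn0 : (0 : ℝ) < 1 / (n : ℝ) := by
    have : (0 : ℝ) < n := by exact_mod_cast (by omega : 0 < n)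
    positivity
  have ht2 : Tendsto (fun j => volume (Eset u r (κ j)) ^ (1 / (n : ℝ)) * c) atTop (nhds 0) := by
    have h1 := (ENNReal.continuous_rpow_const (y := 1 / (n : ℝ))).tendsto 0 |>.comp hmt
    rw [ENNReal.zero_rpow_of_pos hn0] at h1
    have h2 := ENNReal.Tendsto.mul_const h1 (Or.inr hct)
    rw [zero_mul] at h2
    exact h2
  have := ge_of_tendsto' ht2 hlow
  simp at this

/-- Corollary 4.2: for a nonnegative solution of `div A(x,Du) + b(x)|Du|^α ≥ 0` in `ℝⁿ`,
the maximum over the sphere `|x| = r` equals the maximum over the closed ball `|x| ≤ r`. -/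
theorem stmt_10 (n : ℕ) (hn : 2 ≤ n) (p C₁ C₂ α : ℝ) (hp : 1 < p)
    (hC₁ : 0 < C₁) (hC₂ : 0 < C₂) (hα₁ : p - 1 ≤ α) (hα₂ : α ≤ p)
    (A : Euc n → Euc n → Euc n) (hA : StructCond A p C₁ C₂)
    (b : Euc n → ℝ) (hbm : Measurable b) (hb0 : ∀ x, 0 ≤ b x) (hbloc : LocBdd b)
    (u : Euc n → ℝ) (hu : ContDiff ℝ 1 u) (hu0 : ∀ x, 0 ≤ u x)
    (hsol : IsWeakSol A b α (fun _ => 0) Set.univ u) :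
    ∀ r : ℝ, 0 < r →
      sSup (u '' Metric.sphere (0 : Euc n) r) = sSup (u '' Metric.closedBall (0 : Euc n) r) := by
  intro r hr
  have hne : (Metric.sphere (0 : Euc n) r).Nonempty := by
    haveI : Nonempty (Fin n) := ⟨⟨0, by omega⟩⟩
    haveI : Nontrivial (Euc n) := by
      have : Nontrivial (Fin n → ℝ) := inferInstance
      exact (WithLp.equiv 2 (Fin n → ℝ)).nontrivial
    exact NormedSpace.sphere_nonempty.2 hr.le
  obtain ⟨s₀, hs₀, hs⟩ := (isCompact_sphere (0 : Euc n) r).exists_isMaxOn hne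
    hu.continuous.continuousOn
  obtain ⟨x₀, hx₀, hx⟩ := (isCompact_closedBall (0 : Euc n) r).exists_isMaxOn
    ⟨0, by simp [hr.le]⟩ hu.continuous.continuousOn
  have g1 : IsGreatest (u '' Metric.sphere (0 : Euc n) r) (u s₀) :=
    ⟨mem_image_of_mem u hs₀, by rintro _ ⟨y, hy, rfl⟩; exact hs hy⟩
  have g2 : IsGreatest (u '' Metric.closedBall (0 : Euc n) r) (u x₀) :=
    ⟨mem_image_of_mem u hx₀, by rintro _ ⟨y, hy, rfl⟩; exact hx hy⟩
  rw [g1.csSup_eq, g2.csSup_eq]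
  refine le_antisymm (hx (sphere_subset_closedBall hs₀)) ?_
  by_contra! hlt
  exact no_interior_max n hn p C₁ C₂ α hp hC₁ hC₂ hα₁ A hA b hbm hb0 hbloc u hu hsol r (u s₀) x₀
    (by simpa using hx₀) hlt (fun y hy => hs (by simpa using hy))
    (fun y hy => hx (by simpa using hy))
end
end

section
/- (Caccioppoli-type inequality.) There exists a constant C > 0, depending only on n, p, α, C₁ and C₂, with the following property: let r > 0, z ∈ ℝⁿ, and let v be a bounded nonnegative C¹ function on the open ball B_r(z) which is a solution of div A(x,Dv) + b(x)|Dv|^α ≥ 0 in B_r(z) and satisfies r^{p−α}·(sup_{B_r(z)} v)^{α−p+1}·(ess sup_{B_r(z)} b) ≤ C₁/2. Then for all real numbers 0 < r₁ < r₂ ≤ r and every real γ ≥ 1 one has ∫_{B_{r₁}(z)} |D(v^γ)(x)|^p dx ≤ (C/(r₂ − r₁)^p)·∫_{B_{r₂}(z)} v(x)^{γp} dx. -/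
open MeasureTheory Metric Set Filter
open scoped RealInnerProductSpace ENNReal

noncomputable section

lemma aux_smooth_approx {n : ℕ} (U : Set (Euc n)) (hU : IsOpen U) (φ : Euc n → ℝ)
    (hφ : ContDiff ℝ 1 φ) (hc : HasCompactSupport φ) (hs : tsupport φ ⊆ U) (h0 : ∀ x, 0 ≤ φ x) :
    ∃ K : Set (Euc n), IsCompact K ∧ K ⊆ U ∧ tsupport φ ⊆ K ∧ ∀ ε > 0, ∃ ψ : Euc n → ℝ,
      ContDiff ℝ (⊤ : ℕ∞) ψ ∧ HasCompactSupport ψ ∧ tsupport ψ ⊆ K ∧ (∀ x, 0 ≤ ψ x) ∧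
      (∀ x, |ψ x - φ x| ≤ ε) ∧ ∀ x, ‖fderiv ℝ ψ x - fderiv ℝ φ x‖ ≤ ε := by
  have hc' : IsCompact (tsupport φ) := hc
  obtain ⟨δ, hδ, hδU⟩ := hc'.exists_cthickening_subset_open hU hs
  refine ⟨cthickening δ (tsupport φ), hc'.cthickening, hδU, self_subset_cthickening _, ?_⟩
  intro ε hε
  have hcd : Continuous (fderiv ℝ φ) := hφ.continuous_fderiv one_ne_zero
  have hcs : HasCompactSupport (fderiv ℝ φ) := hc.fderiv ℝ
  obtain ⟨d1, hd1, H1⟩ := Metric.uniformContinuous_iff.1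
    (hc.uniformContinuous_of_continuous hφ.continuous) ε hε
  obtain ⟨d2, hd2, H2⟩ := Metric.uniformContinuous_iff.1
    (hcs.uniformContinuous_of_continuous hcd) ε hε
  set R := min δ (min d1 d2) with hR
  have hRpos : 0 < R := by positivity
  let f : ContDiffBump (0 : Euc n) := ⟨R / 2, R, by positivity, by linarith⟩
  have hfR : f.rOut = R := rfl
  set ψ := convolution (f.normed volume) φ (ContinuousLinearMap.lsmul ℝ ℝ) volume with hψ
  have hsub : tsupport ψ ⊆ cthickening δ (tsupport φ) := by
    refine closure_minimal ?_ isClosed_cthickening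
    refine (support_convolution_subset _).trans ?_
    rw [f.support_normed_eq]
    rintro _ ⟨a, ha, b, hb, rfl⟩
    refine mem_cthickening_of_dist_le _ b δ _ (subset_closure hb) ?_
    rw [mem_ball, dist_zero_right, hfR] at ha
    simp only [dist_eq_norm, add_sub_cancel_right]
    exact ha.le.trans (min_le_left _ _)
  have hfd : ∀ x, fderiv ℝ ψ x =
      convolution (f.normed volume) (fderiv ℝ φ) (ContinuousLinearMap.lsmul ℝ ℝ) volume x := by
    intro x
    have := (hc.hasFDerivAt_convolution_right (ContinuousLinearMap.lsmul ℝ ℝ)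
      ((f.continuous_normed (μ := volume)).locallyIntegrable (μ := volume)) hφ x).fderiv
    rw [hψ, this]
    simp only [convolution]
    congr 1
  refine ⟨ψ, ?_, ?_, hsub, ?_, ?_, ?_⟩
  · exact f.hasCompactSupport_normed.contDiff_convolution_left _ f.contDiff_normed
      hφ.continuous.locallyIntegrable
  · exact HasCompactSupport.of_support_subset_isCompact hc'.cthickening
      (subset_closure.trans hsub)
  · intro x
    refine integral_nonneg fun t => ?_
    simp only [ContinuousLinearMap.lsmul_apply, smul_eq_mul, Pi.zero_apply]
    exact mul_nonneg (f.nonneg_normed t) (h0 _)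
  · intro x
    rw [← Real.dist_eq]
    refine ContDiffBump.dist_normed_convolution_le hφ.continuous.aestronglyMeasurable ?_
    intro y hy
    exact (H1 (lt_of_lt_of_le hy (by rw [hfR]; exact (min_le_right _ _).trans (min_le_left _ _)))).le
  · intro x
    rw [← dist_eq_norm, hfd]
    refine ContDiffBump.dist_normed_convolution_le hcd.aestronglyMeasurable ?_
    intro y hy
    exact (H2 (lt_of_lt_of_le hy (by rw [hfR]; exact (min_le_right _ _).trans (min_le_right _ _)))).le

lemma aux_inner_gradient {n : ℕ} (f : Euc n → ℝ) (x w : Euc n) :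
    ⟪w, gradient f x⟫ = fderiv ℝ f x w := by
  rw [real_inner_comm]
  simp [gradient]

lemma aux_norm_gradient {n : ℕ} (f : Euc n → ℝ) (x : Euc n) :
    ‖gradient f x‖ = ‖fderiv ℝ f x‖ := by
  simp [gradient]

lemma aux_measurable_gradient {n : ℕ} (f : Euc n → ℝ) : Measurable (gradient f) := by
  have h := measurable_fderiv ℝ f
  exact (LinearIsometryEquiv.continuous _).measurable.comp h

lemma aux_integrable {n : ℕ} (U K : Set (Euc n)) (hK : IsCompact K)
    (G : Euc n → Euc n) (hG : Measurable G) (h : Euc n → ℝ) (hh : Measurable h)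
    (M : ℝ) (hGM : ∀ x ∈ K, ‖G x‖ ≤ M) (hhM : ∀ x ∈ K, |h x| ≤ M)
    (φ : Euc n → ℝ) (hφ : ContDiff ℝ 1 φ) (hc : HasCompactSupport φ) (hs : tsupport φ ⊆ K) :
    IntegrableOn (fun x => fderiv ℝ φ x (G x)) U ∧ IntegrableOn (fun x => h x * φ x) U := by
  have hcd : Continuous (fderiv ℝ φ) := hφ.continuous_fderiv one_ne_zero
  have hcs : HasCompactSupport (fderiv ℝ φ) := hc.fderiv ℝ
  obtain ⟨C1, hC1⟩ := hc.exists_bound_of_continuous hφ.continuous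
  obtain ⟨C2, hC2⟩ := hcs.exists_bound_of_continuous hcd
  have hC1' : 0 ≤ C1 := (norm_nonneg _).trans (hC1 0)
  have hC2' : 0 ≤ C2 := (norm_nonneg _).trans (hC2 0)
  have mes : Measurable (fun x => fderiv ℝ φ x (G x)) := by
    have : (fun x => fderiv ℝ φ x (G x)) = fun x => ⟪G x, gradient φ x⟫ := by
      ext x; rw [aux_inner_gradient]
    rw [this]
    exact hG.inner (aux_measurable_gradient φ)
  have key : ∀ (F : Euc n → ℝ), Measurable F → (∀ x, x ∉ K → F x = 0) →
      (∃ C, ∀ x ∈ K, ‖F x‖ ≤ C) → IntegrableOn F U := by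
    rintro F hF h0 ⟨C, hC⟩
    refine Integrable.integrableOn ?_
    rw [← integrableOn_iff_integrable_of_support_subset (s := K)]
    · exact IntegrableOn.of_bound hK.measure_lt_top hF.aestronglyMeasurable C
        ((ae_restrict_iff' hK.measurableSet).2 (ae_of_all _ hC))
    · intro x hx
      by_contra hxK
      exact hx (h0 x hxK)
  constructor
  · refine key _ mes ?_ ⟨C2 * M, ?_⟩
    · intro x hx
      have : fderiv ℝ φ x = 0 := by
        by_contra hne
        exact hx (hs (support_fderiv_subset ℝ hne))
      simp [this]
    · intro x hx
      refine (ContinuousLinearMap.le_opNorm _ _).trans ?_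
      exact mul_le_mul (hC2 x) (hGM x hx) (norm_nonneg _) hC2'
  · refine key _ (hh.mul hφ.continuous.measurable) ?_ ⟨M * C1, ?_⟩
    · intro x hx
      have : φ x = 0 := by
        by_contra hne
        exact hx (hs (subset_closure hne))
      simp [this]
    · intro x hx
      rw [norm_mul]
      exact mul_le_mul (hhM x hx) (hC1 x) (norm_nonneg _) ((abs_nonneg _).trans (hhM x hx))

lemma aux_weak_C1 {n : ℕ} (U : Set (Euc n)) (hU : IsOpen U)
    (G : Euc n → Euc n) (hG : Measurable G) (h : Euc n → ℝ) (hh : Measurable h)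
    (hbd : ∀ K, IsCompact K → K ⊆ U → ∃ M, (∀ x ∈ K, ‖G x‖ ≤ M) ∧ ∀ x ∈ K, |h x| ≤ M)
    (H : ∀ φ : Euc n → ℝ, ContDiff ℝ (⊤ : ℕ∞) φ → HasCompactSupport φ → tsupport φ ⊆ U →
      (∀ x, 0 ≤ φ x) → 0 ≤ -(∫ x in U, fderiv ℝ φ x (G x)) + ∫ x in U, h x * φ x)
    (φ : Euc n → ℝ) (hφ : ContDiff ℝ 1 φ) (hc : HasCompactSupport φ) (hs : tsupport φ ⊆ U)
    (h0 : ∀ x, 0 ≤ φ x) :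
    IntegrableOn (fun x => h x * φ x - fderiv ℝ φ x (G x)) U ∧
      0 ≤ ∫ x in U, (h x * φ x - fderiv ℝ φ x (G x)) := by
  obtain ⟨K, hK, hKU, hsK, happ⟩ := aux_smooth_approx U hU φ hφ hc hs h0
  obtain ⟨M0, hM1', hM2'⟩ := hbd K hK hKU
  set M := max M0 0 with hM
  have hM1 : ∀ x ∈ K, ‖G x‖ ≤ M := fun x hx => (hM1' x hx).trans (le_max_left _ _)
  have hM2 : ∀ x ∈ K, |h x| ≤ M := fun x hx => (hM2' x hx).trans (le_max_left _ _)
  have hMn : 0 ≤ M := le_max_right _ _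
  obtain ⟨i1, i2⟩ := aux_integrable U K hK G hG h hh M hM1 hM2 φ hφ hc hsK
  have iφ : IntegrableOn (fun x => h x * φ x - fderiv ℝ φ x (G x)) U := i2.sub i1
  refine ⟨iφ, ?_⟩
  have main : ∀ ε > 0, 0 ≤ (∫ x in U, (h x * φ x - fderiv ℝ φ x (G x)))
      + (2 * M * volume.real K) * ε := by
    intro ε hε
    obtain ⟨ψ, p1, p2, p3, p4, p5, p6⟩ := happ ε hε
    have p1' : ContDiff ℝ 1 ψ := p1.of_le (by exact_mod_cast le_top)
    obtain ⟨j1, j2⟩ := aux_integrable U K hK G hG h hh M hM1 hM2 ψ p1' p2 p3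
    have jψ : IntegrableOn (fun x => h x * ψ x - fderiv ℝ ψ x (G x)) U := j2.sub j1
    have hpos := H ψ p1 p2 (p3.trans hKU) p4
    have e1 : -(∫ x in U, fderiv ℝ ψ x (G x)) + ∫ x in U, h x * ψ x =
        ∫ x in U, (h x * ψ x - fderiv ℝ ψ x (G x)) := by
      rw [integral_sub j2 j1]; ring
    rw [e1] at hpos
    have zero : ∀ χ : Euc n → ℝ, tsupport χ ⊆ K → ∀ x, x ∉ K → χ x = 0 ∧ fderiv ℝ χ x = 0 := by
      intro χ hχ x hx
      constructor
      · by_contra hne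
        exact hx (hχ (subset_closure hne))
      · by_contra hne
        exact hx (hχ (support_fderiv_subset ℝ hne))
    have e2 : (∫ x in U, (h x * ψ x - fderiv ℝ ψ x (G x))) -
        (∫ x in U, (h x * φ x - fderiv ℝ φ x (G x))) =
        ∫ x in K, ((h x * ψ x - fderiv ℝ ψ x (G x)) - (h x * φ x - fderiv ℝ φ x (G x))) := by
      rw [← integral_sub jψ iφ]
      refine setIntegral_eq_of_subset_of_forall_sdiff_eq_zero hU.measurableSet hKU ?_
      intro x hx
      obtain ⟨q1, q2⟩ := zero ψ p3 x hx.2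
      obtain ⟨q3, q4⟩ := zero φ hsK x hx.2
      simp [q1, q2, q3, q4]
    have e3 := norm_setIntegral_le_of_norm_le_const (C := 2 * M * ε)
      (f := fun x => ((h x * ψ x - fderiv ℝ ψ x (G x)) - (h x * φ x - fderiv ℝ φ x (G x))))
      (hK.measure_lt_top (μ := volume)) (by
        intro x hx
        have : ((h x * ψ x - fderiv ℝ ψ x (G x)) - (h x * φ x - fderiv ℝ φ x (G x))) =
          h x * (ψ x - φ x) - (fderiv ℝ ψ x - fderiv ℝ φ x) (G x) := by
          rw [_root_.sub_apply]; ring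
        rw [this]
        refine (norm_sub_le _ _).trans ?_
        have a1 : ‖h x * (ψ x - φ x)‖ ≤ M * ε := by
          rw [norm_mul]
          exact mul_le_mul (hM2 x hx) (p5 x) (norm_nonneg _) hMn
        have a2 : ‖(fderiv ℝ ψ x - fderiv ℝ φ x) (G x)‖ ≤ ε * M :=
          (ContinuousLinearMap.le_opNorm _ _).trans
            (mul_le_mul (p6 x) (hM1 x hx) (norm_nonneg _) hε.le)
        linarith)
    rw [← e2, Real.norm_eq_abs] at e3
    have := (abs_le.1 e3).2
    nlinarith
  by_contra hneg
  push Not at hneg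
  set I := ∫ x in U, (h x * φ x - fderiv ℝ φ x (G x)) with hI
  have hv : 0 ≤ 2 * M * volume.real K := by positivity
  have := main (-I / (2 * (2 * M * volume.real K + 1))) (by apply div_pos <;> linarith)
  rw [mul_div_assoc', ← sub_le_iff_le_add', zero_sub, le_div_iff₀ (by linarith)] at this
  nlinarith

lemma aux_young (p K e s a d : ℝ) (hp : 1 < p) (hK : 0 < K) (he : 0 < e) (hs : 0 < s)
    (ha : 0 ≤ a) (hd : 0 ≤ d) :
    K * a ^ (p - 1) * d ≤ e * s * a ^ p + K ^ p * e ^ (1 - p) * s ^ (1 - p) * d ^ p := by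
  have e1 : ∀ y : ℝ, 0 ≤ y → y ^ p = y ^ (p - 1) * y := by
    intro y hy
    conv_rhs => rw [← Real.rpow_one y]
    rw [Real.rpow_one, ← Real.rpow_add_one' hy (by linarith)]; congr 1; ring
  have hes : 0 < e * s := by positivity
  by_cases hc : K * d ≤ e * s * a
  · have : 0 ≤ K ^ p * e ^ (1 - p) * s ^ (1 - p) * d ^ p := by positivity
    rw [e1 a ha]
    have := mul_le_mul_of_nonneg_left hc (Real.rpow_nonneg ha (p - 1))
    nlinarith
  · push Not at hc
    have h1 : a ≤ K * d / (e * s) := by rw [le_div_iff₀ hes]; linarith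
    have h2 : a ^ (p - 1) ≤ (K * d / (e * s)) ^ (p - 1) :=
      Real.rpow_le_rpow ha h1 (by linarith)
    have h3 : (K * d / (e * s)) ^ (p - 1) * (K * d) =
        K ^ p * e ^ (1 - p) * s ^ (1 - p) * d ^ p := by
      rw [Real.div_rpow (by positivity) hes.le, Real.mul_rpow hK.le hd, Real.mul_rpow he.le hs.le,
        e1 K hK.le, e1 d hd, show (1 - p) = -(p - 1) by ring, Real.rpow_neg he.le,
        Real.rpow_neg hs.le]
      field_simp
    have h4 := mul_le_mul_of_nonneg_right h2 (by positivity : 0 ≤ K * d)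
    have h5 : 0 ≤ e * s * a ^ p := by positivity
    nlinarith

lemma aux_young2 (p α s t w : ℝ) (hp : 1 < p) (h1 : p - 1 ≤ α) (h2 : α ≤ p) (hs : 1 ≤ s)
    (ht : 0 ≤ t) (hw : 0 ≤ w) :
    t ^ α * w ^ (p - α) ≤ s * t ^ p + s ^ (1 - p) * w ^ p := by
  have hs0 : 0 < s := by linarith
  have e1 : ∀ y : ℝ, 0 ≤ y → y ^ p = y ^ α * y ^ (p - α) := by
    intro y hy
    rw [← Real.rpow_add_of_nonneg hy (by linarith) (by linarith)]; congr 1; ring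
  by_cases hc : w ≤ s * t
  · have h3 : w ^ (p - α) ≤ s ^ (p - α) * t ^ (p - α) := by
      rw [← Real.mul_rpow hs0.le ht]
      exact Real.rpow_le_rpow hw hc (by linarith)
    have h4 : s ^ (p - α) ≤ s := by
      conv_rhs => rw [← Real.rpow_one s]
      exact Real.rpow_le_rpow_of_exponent_le hs (by linarith)
    have h5 : 0 ≤ s ^ (1 - p) * w ^ p := by positivity
    have h6 : t ^ α * w ^ (p - α) ≤ t ^ α * (s * t ^ (p - α)) := by
      gcongr
      exact h3.trans (by gcongr)
    rw [e1 t ht]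
    nlinarith
  · push Not at hc
    have h3 : t ≤ w / s := by rw [le_div_iff₀ hs0]; linarith
    have h4 : t ^ α ≤ s ^ (1 - p) * w ^ α := by
      have : t ^ α ≤ (w / s) ^ α := Real.rpow_le_rpow ht h3 (by linarith)
      rw [Real.div_rpow hw hs0.le, div_eq_mul_inv, ← Real.rpow_neg hs0.le, mul_comm] at this
      refine this.trans ?_
      have : s ^ (-α) ≤ s ^ (1 - p) := Real.rpow_le_rpow_of_exponent_le hs (by linarith)
      gcongr
    have h5 : 0 ≤ s * t ^ p := by positivity
    have h6 : t ^ α * w ^ (p - α) ≤ s ^ (1 - p) * w ^ α * w ^ (p - α) := by gcongr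
    rw [e1 w hw]
    nlinarith

lemma aux_smoothTransition_bound : ∃ L : ℝ, 0 < L ∧ ∀ t, |deriv Real.smoothTransition t| ≤ L := by
  have hcd : ContDiff ℝ 1 Real.smoothTransition := Real.smoothTransition.contDiff (n := 1)
  have hc : Continuous (deriv Real.smoothTransition) := hcd.continuous_deriv le_rfl
  have hcs : HasCompactSupport (deriv Real.smoothTransition) := by
    refine HasCompactSupport.intro (K := Icc 0 1) isCompact_Icc ?_
    intro x hx
    rw [mem_Icc, not_and_or, not_le, not_le] at hx
    rcases hx with hx | hx
    · have : Real.smoothTransition =ᶠ[nhds x] fun _ => 0 := by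
        filter_upwards [Iio_mem_nhds hx] with y hy
        exact Real.smoothTransition.zero_of_nonpos (le_of_lt hy)
      rw [this.deriv_eq]; simp
    · have : Real.smoothTransition =ᶠ[nhds x] fun _ => 1 := by
        filter_upwards [Ioi_mem_nhds hx] with y hy
        exact Real.smoothTransition.one_of_one_le (le_of_lt hy)
      rw [this.deriv_eq]; simp
  obtain ⟨C, hC⟩ := hcs.exists_bound_of_continuous hc
  exact ⟨|C| + 1, by positivity, fun t => (hC t).trans (by linarith [le_abs_self C])⟩

lemma aux_cutoff (n : ℕ) : ∃ L : ℝ, 0 < L ∧ ∀ (z : Euc n) (r₁ r₂ : ℝ), 0 < r₁ → r₁ < r₂ →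
    ∃ η : Euc n → ℝ, ContDiff ℝ 1 η ∧ (∀ x, 0 ≤ η x) ∧ (∀ x, η x ≤ 1) ∧
      (∀ x ∈ ball z r₁, η x = 1) ∧ tsupport η ⊆ ball z r₂ ∧ HasCompactSupport η ∧
      ∀ x, ‖fderiv ℝ η x‖ ≤ L / (r₂ - r₁) := by
  obtain ⟨L, hL, hLb⟩ := aux_smoothTransition_bound
  refine ⟨4 * L, by positivity, ?_⟩
  intro z r₁ r₂ h1 h12
  set ρ := (r₁ + r₂) / 2 with hρ
  have hρ1 : r₁ < ρ := by rw [hρ]; linarith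
  have hρ2 : ρ < r₂ := by rw [hρ]; linarith
  have hD : 0 < ρ ^ 2 - r₁ ^ 2 := by nlinarith
  let q : Euc n → ℝ := fun x => (ρ ^ 2 - ‖x - z‖ ^ 2) / (ρ ^ 2 - r₁ ^ 2)
  have hq : ContDiff ℝ 1 q := by
    have : ContDiff ℝ 1 (fun x : Euc n => ‖x - z‖ ^ 2) := (contDiff_id.sub contDiff_const).norm_sq ℝ
    exact (contDiff_const.sub this).div_const _
  have hS : ContDiff ℝ 1 Real.smoothTransition := Real.smoothTransition.contDiff (n := 1)
  set η : Euc n → ℝ := fun x => Real.smoothTransition (q x) with hη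
  have hout : ∀ x, x ∉ closedBall z ρ → η x = 0 := by
    intro x hx
    rw [mem_closedBall, not_le, dist_eq_norm] at hx
    refine Real.smoothTransition.zero_of_nonpos ?_
    refine div_nonpos_of_nonpos_of_nonneg ?_ hD.le
    nlinarith
  have hsup : tsupport η ⊆ closedBall z ρ := by
    refine closure_minimal ?_ isClosed_closedBall
    intro x hx
    by_contra hn
    exact hx (hout x hn)
  refine ⟨η, hS.comp hq, fun x => Real.smoothTransition.nonneg _,
    fun x => Real.smoothTransition.le_one _, ?_, ?_, ?_, ?_⟩
  · intro x hx
    rw [mem_ball, dist_eq_norm] at hx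
    refine Real.smoothTransition.one_of_one_le ?_
    rw [one_le_div hD]
    nlinarith [norm_nonneg (x - z)]
  · exact hsup.trans (closedBall_subset_ball hρ2)
  · exact HasCompactSupport.intro (isCompact_closedBall z ρ) hout
  · intro x
    by_cases hx : x ∈ closedBall z ρ
    · rw [mem_closedBall, dist_eq_norm] at hx
      have d1 : HasFDerivAt (fun x : Euc n => ‖x - z‖ ^ 2) (2 • (innerSL ℝ (x - z))) x := by
        have := (hasFDerivAt_id (𝕜 := ℝ) x).sub_const z |>.norm_sq
        simpa using this
      have d2 : HasFDerivAt q ((ρ ^ 2 - r₁ ^ 2)⁻¹ • (-(2 • (innerSL ℝ (x - z)) : Euc n →L[ℝ] ℝ))) x := by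
        have := (d1.const_sub (ρ ^ 2)).const_mul (ρ ^ 2 - r₁ ^ 2)⁻¹
        refine this.congr_of_eventuallyEq (Eventually.of_forall fun y => ?_)
        simp only [q, div_eq_inv_mul]
      have d3 : HasDerivAt Real.smoothTransition (deriv Real.smoothTransition (q x)) (q x) :=
        (hS.differentiable one_ne_zero _).hasDerivAt
      have d4 := (d3.comp_hasFDerivAt x d2).fderiv
      have : fderiv ℝ η x = _ := d4
      rw [this, norm_smul, norm_smul, norm_neg, Real.norm_eq_abs, norm_inv, Real.norm_eq_abs,
        abs_of_pos hD]
      have b1 : ‖(2 • (innerSL ℝ (x - z)) : Euc n →L[ℝ] ℝ)‖ ≤ 2 * ρ := by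
        rw [two_smul]
        refine (norm_add_le _ _).trans ?_
        rw [innerSL_apply_norm]; linarith
      have b2 : (ρ ^ 2 - r₁ ^ 2)⁻¹ * (2 * ρ) ≤ 4 / (r₂ - r₁) := by
        rw [inv_mul_eq_div, div_le_div_iff₀ hD (by linarith)]
        have : r₂ - r₁ = 2 * (ρ - r₁) := by rw [hρ]; ring
        rw [this]
        nlinarith
      calc _ ≤ L * ((ρ ^ 2 - r₁ ^ 2)⁻¹ * (2 * ρ)) := by
            gcongr
            exact hLb _
        _ ≤ L * (4 / (r₂ - r₁)) := by gcongr
        _ = 4 * L / (r₂ - r₁) := by ring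
    · have : fderiv ℝ η x = 0 := by
        by_contra hne
        exact hx (hsup (support_fderiv_subset ℝ hne))
      rw [this, norm_zero]
      exact div_nonneg (by positivity) (by linarith)

lemma aux_pointwise (p α C₁ C₂ γ r t v η d b g₁ g₂ : ℝ) (hp : 1 < p) (h1 : p - 1 ≤ α)
    (h2 : α ≤ p) (hC₁ : 0 < C₁) (hC₂ : 0 < C₂) (hγ : 1 ≤ γ) (hr : 0 < r) (ht : 0 ≤ t)
    (hv : 0 ≤ v) (hη : 0 ≤ η) (hd : 0 ≤ d) (hg₁ : |g₁| ≤ d * (C₂ * t ^ (p - 1)))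
    (hg₂ : C₁ * t ^ p ≤ g₂) (hb : r ^ (p - α) * v ^ (α - p + 1) * b ≤ C₁ / 2) :
    b * t ^ α * (η ^ p * v ^ (p * (γ - 1) + 1)) -
      (η ^ p * ((p * (γ - 1) + 1) * v ^ (p * (γ - 1)) * g₂) +
        v ^ (p * (γ - 1) + 1) * (p * η ^ (p - 1) * g₁)) ≤
      v ^ (p * (γ - 1)) * (-(C₁ / 4) * (p * (γ - 1) + 1) * (η ^ p * t ^ p) +
        (p * (γ - 1) + 1) ^ (1 - p) * ((p * C₂) ^ p * (C₁ / 4) ^ (1 - p) * (d * v) ^ p +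
          C₁ / 2 * (v / r) ^ p * η ^ p)) := by
  have hk : 0 ≤ p * (γ - 1) := mul_nonneg (by linarith) (by linarith)
  set k := p * (γ - 1) with hkdef
  set s := k + 1 with hs
  have hs1 : 1 ≤ s := by linarith
  have ev : v ^ s = v ^ k * v := by
    rw [hs, Real.rpow_add_of_nonneg hv hk zero_le_one, Real.rpow_one]
  have hvk : 0 ≤ v ^ k := Real.rpow_nonneg hv _
  have hηp : 0 ≤ η ^ p := Real.rpow_nonneg hη _
  have hηp1 : 0 ≤ η ^ (p - 1) := Real.rpow_nonneg hη _
  -- first term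
  have y1 := aux_young p (p * C₂) (C₁ / 4) s (η * t) (d * v) hp (by positivity) (by positivity)
    (by positivity) (by positivity) (by positivity)
  rw [Real.mul_rpow hη ht, Real.mul_rpow hη ht] at y1
  have q1 : -(v * (p * η ^ (p - 1) * g₁)) ≤ p * C₂ * (η ^ (p - 1) * t ^ (p - 1)) * (d * v) := by
    have : -g₁ ≤ d * (C₂ * t ^ (p - 1)) := (neg_le_abs _).trans hg₁
    have h3 := mul_le_mul_of_nonneg_left this (by positivity : 0 ≤ v * (p * η ^ (p - 1)))
    nlinarith
  -- second term
  have q2 : s * (C₁ * t ^ p) ≤ s * g₂ := by gcongr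
  have q2' := mul_le_mul_of_nonneg_left q2 hηp
  -- third term
  have y2 := aux_young2 p α s t (v / r) hp h1 h2 hs1 ht (by positivity)
  have ev1 : v = v ^ (α - p + 1) * v ^ (p - α) := by
    rw [← Real.rpow_add_of_nonneg hv (by linarith) (by linarith)]
    conv_lhs => rw [← Real.rpow_one v]
    congr 1; ring
  have er : v ^ (p - α) = r ^ (p - α) * (v / r) ^ (p - α) := by
    rw [← Real.mul_rpow hr.le (by positivity)]; congr 1; field_simp
  have q3 : b * t ^ α * v ≤ C₁ / 2 * (s * t ^ p + s ^ (1 - p) * (v / r) ^ p) := by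
    have : b * t ^ α * v =
        (r ^ (p - α) * v ^ (α - p + 1) * b) * (t ^ α * (v / r) ^ (p - α)) := by
      conv_lhs => rw [ev1, er]
      ring
    rw [this]
    exact (mul_le_mul_of_nonneg_right hb (by positivity)).trans
      (mul_le_mul_of_nonneg_left y2 (by positivity))
  have q3' := mul_le_mul_of_nonneg_left q3 hηp
  rw [ev]
  have tot : b * t ^ α * (η ^ p * v) - (η ^ p * (s * g₂) + v * (p * η ^ (p - 1) * g₁)) ≤
      (-(C₁ / 4) * s * (η ^ p * t ^ p) +
        s ^ (1 - p) * ((p * C₂) ^ p * (C₁ / 4) ^ (1 - p) * (d * v) ^ p +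
          C₁ / 2 * (v / r) ^ p * η ^ p)) := by
    nlinarith
  have := mul_le_mul_of_nonneg_left tot hvk
  refine le_trans (le_of_eq ?_) this
  ring

lemma aux_pointwise2 (p C₁ C₂ γ r t v η d δ L F P : ℝ) (hp : 1 < p) (hC₁ : 0 < C₁)
    (hC₂ : 0 < C₂) (hγ : 1 ≤ γ) (hL : 0 < L) (hδ : 0 < δ) (hδr : δ ≤ r) (ht : 0 ≤ t)
    (hv : 0 ≤ v) (hη : 0 ≤ η) (hη1 : η ≤ 1) (hd : 0 ≤ d) (hdL : d ≤ L / δ)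
    (hF : F ≤ v ^ (p * (γ - 1)) * (-(C₁ / 4) * (p * (γ - 1) + 1) * (η ^ p * t ^ p) +
        (p * (γ - 1) + 1) ^ (1 - p) * ((p * C₂) ^ p * (C₁ / 4) ^ (1 - p) * (d * v) ^ p +
          C₁ / 2 * (v / r) ^ p * η ^ p)))
    (hP : P ≤ γ ^ p * v ^ (p * (γ - 1)) * (η ^ p * t ^ p)) :
    P + (4 / C₁ * γ ^ p / (p * (γ - 1) + 1)) * F ≤
      (4 / C₁ * ((p * C₂) ^ p * (C₁ / 4) ^ (1 - p) * L ^ p + C₁ / 2)) / δ ^ p * v ^ (γ * p) := by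
  have hk : 0 ≤ p * (γ - 1) := mul_nonneg (by linarith) (by linarith)
  have hγs : γ ≤ p * (γ - 1) + 1 := by nlinarith
  set k := p * (γ - 1) with hkdef
  set s := k + 1 with hs
  have hs1 : 1 ≤ s := by linarith
  have hs0 : 0 < s := by linarith
  have hr : 0 < r := by linarith
  have hvk : 0 ≤ v ^ k := Real.rpow_nonneg hv _
  set Q := (p * C₂) ^ p * (C₁ / 4) ^ (1 - p) with hQ
  have hQ0 : 0 ≤ Q := by positivity
  have hvp : 0 ≤ v ^ p := Real.rpow_nonneg hv _
  have a1 : (d * v) ^ p ≤ L ^ p / δ ^ p * v ^ p := by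
    rw [← Real.div_rpow hL.le hδ.le, ← Real.mul_rpow (by positivity) hv]
    gcongr
  have a2 : (v / r) ^ p * η ^ p ≤ 1 / δ ^ p * v ^ p := by
    have e1 : (v / r) ^ p ≤ (v / δ) ^ p := by gcongr
    have e2 : η ^ p ≤ 1 := Real.rpow_le_one hη hη1 (by linarith)
    calc (v / r) ^ p * η ^ p ≤ (v / δ) ^ p * 1 := by gcongr
      _ = _ := by rw [Real.div_rpow hv hδ.le]; ring
  have a3 : Q * (d * v) ^ p + C₁ / 2 * (v / r) ^ p * η ^ p ≤
      (Q * L ^ p + C₁ / 2) / δ ^ p * v ^ p := by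
    have b1 := mul_le_mul_of_nonneg_left a1 hQ0
    have b2 := mul_le_mul_of_nonneg_left a2 (by positivity : 0 ≤ C₁ / 2)
    have : (Q * L ^ p + C₁ / 2) / δ ^ p * v ^ p =
      Q * (L ^ p / δ ^ p * v ^ p) + C₁ / 2 * (1 / δ ^ p * v ^ p) := by ring
    rw [this]; linarith
  set D := Q * L ^ p + C₁ / 2 with hD
  have hD0 : 0 ≤ D := by positivity
  have hc : 0 ≤ 4 / C₁ * γ ^ p / s := by positivity
  have ev : v ^ (γ * p) = v ^ k * v ^ p := by
    rw [← Real.rpow_add_of_nonneg hv hk (by linarith)]; congr 1; rw [hkdef]; ring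
  have c1 : F ≤ v ^ k * (-(C₁ / 4) * s * (η ^ p * t ^ p) + s ^ (1 - p) * (D / δ ^ p * v ^ p)) := by
    refine hF.trans ?_
    gcongr
  have c2 := mul_le_mul_of_nonneg_left c1 hc
  have c3 : 4 / C₁ * γ ^ p / s *
      (v ^ k * (-(C₁ / 4) * s * (η ^ p * t ^ p) + s ^ (1 - p) * (D / δ ^ p * v ^ p))) =
      -(γ ^ p * v ^ k * (η ^ p * t ^ p)) +
        (γ ^ p * (s ^ (1 - p) / s)) * (4 / C₁ * D / δ ^ p * (v ^ k * v ^ p)) := by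
    field_simp
  have c4 : γ ^ p * (s ^ (1 - p) / s) ≤ 1 := by
    have : s ^ (1 - p) / s = (s ^ p)⁻¹ := by
      rw [Real.rpow_sub hs0, Real.rpow_one]; field_simp
    rw [this, ← div_eq_mul_inv, div_le_one (by positivity)]
    gcongr
  have c5 : 0 ≤ 4 / C₁ * D / δ ^ p * (v ^ k * v ^ p) := by positivity
  rw [ev]
  nlinarith

/-- Lemma 4.4 (Caccioppoli-type inequality): for a bounded nonnegative solution of
`div A(x,Dv) + b(x)|Dv|^α ≥ 0` in `B_r(z)` with
`r^{p-α} (sup v)^{α-p+1} (ess sup b) ≤ C₁/2`, one has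
`∫_{B_{r₁}(z)} |D(v^γ)|^p ≤ C (r₂-r₁)^{-p} ∫_{B_{r₂}(z)} v^{γp}` for `0 < r₁ < r₂ ≤ r`,
`γ ≥ 1`. -/
theorem stmt_12 (n : ℕ) (hn : 2 ≤ n) (p C₁ C₂ α : ℝ) (hp : 1 < p)
    (hC₁ : 0 < C₁) (hC₂ : 0 < C₂) (hα₁ : p - 1 ≤ α) (hα₂ : α ≤ p) :
    ∃ C : ℝ, 0 < C ∧
      ∀ (A : Euc n → Euc n → Euc n), StructCond A p C₁ C₂ →
      ∀ (b : Euc n → ℝ), Measurable b → (∀ x, 0 ≤ b x) → LocBdd b →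
      ∀ (r : ℝ) (z : Euc n) (v : Euc n → ℝ), 0 < r →
        ContDiffOn ℝ 1 v (Metric.ball z r) →
        (∀ x ∈ Metric.ball z r, 0 ≤ v x) →
        BddAbove (v '' Metric.ball z r) →
        IsWeakSol A b α (fun _ => 0) (Metric.ball z r) v →
        r ^ (p - α) * sSup (v '' Metric.ball z r) ^ (α - p + 1) *
            essSup b (volume.restrict (Metric.ball z r)) ≤ C₁ / 2 →
        ∀ r₁ r₂ γ : ℝ, 0 < r₁ → r₁ < r₂ → r₂ ≤ r → 1 ≤ γ →
          (∫ x in Metric.ball z r₁, ‖gradient (fun y => v y ^ γ) x‖ ^ p) ≤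
            C / (r₂ - r₁) ^ p * ∫ x in Metric.ball z r₂, v x ^ (γ * p) := by
  obtain ⟨L, hL, hcut⟩ := aux_cutoff n
  refine ⟨4 / C₁ * ((p * C₂) ^ p * (C₁ / 4) ^ (1 - p) * L ^ p + C₁ / 2), by positivity, ?_⟩
  intro A hA b hbm hb0 hbl r z v hr hv hv0 hvb hw hsmall r₁ r₂ γ hr1 hr12 hr2 hγ
  obtain ⟨hAm, hA⟩ := hA
  obtain ⟨η, η1, η2, η3, η4, η5, η6, η7⟩ := hcut z r₁ r₂ hr1 hr12
  set U := ball z r with hUdef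
  have hU : IsOpen U := isOpen_ball
  have hk : 0 ≤ p * (γ - 1) := mul_nonneg (by linarith) (by linarith)
  have hη5U : tsupport η ⊆ U := η5.trans (ball_subset_ball hr2)
  set φ : Euc n → ℝ := fun x => η x ^ p * v x ^ (p * (γ - 1) + 1) with hφdef
  set G : Euc n → Euc n := fun x => A x (gradient v x) with hGdef
  set h : Euc n → ℝ := fun x => b x * ‖gradient v x‖ ^ α with hhdef
  have hη0 : ∀ x, x ∉ tsupport η → η x = 0 := fun x hx => by
    by_contra hne; exact hx (subset_closure hne)
  have hφ0 : ∀ x, x ∉ tsupport η → φ x = 0 := by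
    intro x hx
    simp only [hφdef, hη0 x hx]
    rw [Real.zero_rpow (by linarith), zero_mul]
  have hφs : tsupport φ ⊆ tsupport η := by
    refine closure_minimal ?_ (isClosed_tsupport η)
    intro x hx
    by_contra hn'
    exact hx (hφ0 x hn')
  have hvd : ∀ x ∈ U, HasFDerivAt v (fderiv ℝ v x) x := fun x hx =>
    ((hv.differentiableOn one_ne_zero).differentiableAt (hU.mem_nhds hx)).hasFDerivAt
  have hφC : ContDiff ℝ 1 φ := by
    rw [contDiff_iff_contDiffAt]
    intro x
    by_cases hx : x ∈ tsupport η
    · have c1 : ContDiffAt ℝ 1 (fun x => η x ^ p) x := by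
        exact_mod_cast (ContDiffAt.rpow_const_of_le (m := 1) (by exact_mod_cast η1.contDiffAt)
          (by push_cast; linarith))
      have c2 : ContDiffAt ℝ 1 (fun x => v x ^ (p * (γ - 1) + 1)) x := by
        exact_mod_cast (ContDiffAt.rpow_const_of_le (m := 1)
          (by exact_mod_cast (hv.contDiffAt (hU.mem_nhds (hη5U hx)))) (by push_cast; linarith))
      exact c1.mul c2
    · have : φ =ᶠ[nhds x] fun _ => 0 := by
        filter_upwards [(isClosed_tsupport η).isOpen_compl.mem_nhds hx] with y hy
        exact hφ0 y hy
      exact contDiffAt_const.congr_of_eventuallyEq this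
  have hφnn : ∀ x, 0 ≤ φ x := by
    intro x
    by_cases hx : x ∈ tsupport η
    · exact mul_nonneg (Real.rpow_nonneg (η2 x) _) (Real.rpow_nonneg (hv0 x (hη5U hx)) _)
    · rw [hφ0 x hx]
  have hφc : HasCompactSupport φ := HasCompactSupport.intro η6 hφ0
  have hgm := aux_measurable_gradient v
  have hGm : Measurable G := hAm.comp (measurable_id.prodMk hgm)
  have hhm : Measurable h := hbm.mul (hgm.norm.pow_const α)
  have hbd : ∀ K, IsCompact K → K ⊆ U → ∃ M, (∀ x ∈ K, ‖G x‖ ≤ M) ∧ ∀ x ∈ K, |h x| ≤ M := by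
    intro K hK hKU
    have hcont : ContinuousOn (fderiv ℝ v) U := hv.continuousOn_fderiv_of_isOpen hU le_rfl
    obtain ⟨T, hT⟩ := hK.exists_bound_of_continuousOn (hcont.mono hKU)
    obtain ⟨B, hB⟩ := hbl K hK
    refine ⟨max (C₂ * |T| ^ (p - 1)) (|B| * |T| ^ α), ?_, ?_⟩
    · intro x hx
      refine le_trans ?_ (le_max_left _ _)
      refine (hA x (gradient v x)).2.trans ?_
      have : ‖gradient v x‖ ≤ |T| := by
        rw [aux_norm_gradient]; exact (hT x hx).trans (le_abs_self _)
      have hp1 : 0 ≤ p - 1 := by linarith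
      gcongr
    · intro x hx
      refine le_trans ?_ (le_max_right _ _)
      have : ‖gradient v x‖ ≤ |T| := by
        rw [aux_norm_gradient]; exact (hT x hx).trans (le_abs_self _)
      have hα0 : 0 ≤ α := by linarith
      rw [hhdef, abs_of_nonneg (mul_nonneg (hb0 x) (by positivity))]
      have hB' : b x ≤ |B| := (hB x hx).trans (le_abs_self _)
      gcongr
  have H : ∀ φ : Euc n → ℝ, ContDiff ℝ (⊤ : ℕ∞) φ → HasCompactSupport φ → tsupport φ ⊆ U →
      (∀ x, 0 ≤ φ x) → 0 ≤ -(∫ x in U, fderiv ℝ φ x (G x)) + ∫ x in U, h x * φ x := by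
    intro ψ s1 s2 s3 s4
    have := hw ψ s1 s2 s3 s4
    simpa [aux_inner_gradient] using this
  obtain ⟨iF, hF0⟩ := aux_weak_C1 U hU G hGm h hhm hbd H φ hφC hφc (hφs.trans hη5U) hφnn
  set F : Euc n → ℝ := fun x => h x * φ x - fderiv ℝ φ x (G x) with hFdef
  set P : Euc n → ℝ := fun x => ‖gradient (fun y => v y ^ γ) x‖ ^ p with hPdef
  set C := 4 / C₁ * ((p * C₂) ^ p * (C₁ / 4) ^ (1 - p) * L ^ p + C₁ / 2) with hCdef
  have hsub1 : ball z r₁ ⊆ U := ball_subset_ball (by linarith)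
  have hsub2 : ball z r₂ ⊆ U := ball_subset_ball hr2
  have hδ : 0 < r₂ - r₁ := by linarith
  have hCpos : 0 ≤ C / (r₂ - r₁) ^ p := by positivity
  by_cases hPi : IntegrableOn P (ball z r₁)
  swap
  · rw [integral_undef hPi]
    refine mul_nonneg hCpos (setIntegral_nonneg measurableSet_ball ?_)
    intro x hx
    exact Real.rpow_nonneg (hv0 x (hsub2 hx)) _
  have hVi : IntegrableOn (fun x => v x ^ (γ * p)) (ball z r₂) := by
    obtain ⟨M, hM⟩ := hvb
    have hγp : 0 ≤ γ * p := mul_nonneg (by linarith) (by linarith)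
    refine IntegrableOn.of_bound measure_ball_lt_top ?_ (M ^ (γ * p)) ?_
    · refine ContinuousOn.aestronglyMeasurable ?_ measurableSet_ball
      exact (hv.continuousOn.mono hsub2).rpow_const fun x _ => Or.inr hγp
    · refine (ae_restrict_iff' measurableSet_ball).2 (ae_of_all _ fun x hx => ?_)
      have hvx := hv0 x (hsub2 hx)
      rw [Real.norm_eq_abs, abs_of_nonneg (Real.rpow_nonneg hvx _)]
      have := hM (mem_image_of_mem v (hsub2 hx))
      gcongr
  have hbB : ∀ᵐ x ∂(volume.restrict U), b x ≤ essSup b (volume.restrict U) := by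
    refine ae_le_essSup ?_
    obtain ⟨B, hB⟩ := hbl (closedBall z r) (isCompact_closedBall z r)
    refine isBoundedUnder_of_eventually_le (a := B) ?_
    exact (ae_restrict_iff' measurableSet_ball).2
      (ae_of_all _ fun x hx => hB x (ball_subset_closedBall hx))
  set c := 4 / C₁ * γ ^ p / (p * (γ - 1) + 1) with hc
  have hc0 : 0 ≤ c := by positivity
  have hpt : ∀ᵐ x ∂(volume.restrict U),
      (ball z r₁).indicator P x + c * F x ≤
        (ball z r₂).indicator (fun x => C / (r₂ - r₁) ^ p * v x ^ (γ * p)) x := by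
    filter_upwards [hbB, ae_restrict_mem measurableSet_ball] with x hbx hx
    have hvx := hv0 x hx
    have hAx := hA x (gradient v x)
    set t := ‖gradient v x‖ with ht
    have ht0 : 0 ≤ t := norm_nonneg _
    have hsm : r ^ (p - α) * v x ^ (α - p + 1) * b x ≤ C₁ / 2 := by
      refine le_trans ?_ hsmall
      have hvM : v x ≤ sSup (v '' U) := le_csSup hvb (mem_image_of_mem v hx)
      have hexp : 0 ≤ α - p + 1 := by linarith
      have hM0 : 0 ≤ sSup (v '' U) := hvx.trans hvM
      exact mul_le_mul (by gcongr) hbx (hb0 x) (by positivity)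
    have dφ : fderiv ℝ φ x (G x) =
        η x ^ p * ((p * (γ - 1) + 1) * v x ^ (p * (γ - 1)) * (fderiv ℝ v x (G x))) +
        v x ^ (p * (γ - 1) + 1) * (p * η x ^ (p - 1) * (fderiv ℝ η x (G x))) := by
      have d1 : HasFDerivAt η (fderiv ℝ η x) x :=
        (η1.differentiable one_ne_zero x).hasFDerivAt
      have d2 := d1.rpow_const (p := p) (Or.inr hp.le)
      have d3 := (hvd x hx).rpow_const (p := p * (γ - 1) + 1) (Or.inr (by linarith))
      have d4 := (d2.mul d3).fderiv
      have d5 : fderiv ℝ φ x = _ := d4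
      rw [d5]
      simp only [add_sub_cancel_right, _root_.add_apply, _root_.smul_apply, smul_eq_mul]
    have hg1 : |fderiv ℝ η x (G x)| ≤ ‖fderiv ℝ η x‖ * (C₂ * t ^ (p - 1)) := by
      rw [← Real.norm_eq_abs]
      exact ((fderiv ℝ η x).le_opNorm (G x)).trans
        (mul_le_mul_of_nonneg_left hAx.2 (norm_nonneg _))
    have hg2 : C₁ * t ^ p ≤ fderiv ℝ v x (G x) := by
      rw [← aux_inner_gradient, real_inner_comm]
      exact hAx.1
    have hpw := aux_pointwise p α C₁ C₂ γ r t (v x) (η x) ‖fderiv ℝ η x‖ (b x) _ _ hp hα₁ hα₂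
      hC₁ hC₂ hγ hr ht0 hvx (η2 x) (norm_nonneg _) hg1 hg2 hsm
    rw [← dφ] at hpw
    have hFx : F x = b x * t ^ α * (η x ^ p * v x ^ (p * (γ - 1) + 1)) - fderiv ℝ φ x (G x) := rfl
    rw [← hFx] at hpw
    by_cases hx2 : x ∈ ball z r₂
    · rw [indicator_of_mem hx2]
      refine aux_pointwise2 p C₁ C₂ γ r t (v x) (η x) ‖fderiv ℝ η x‖ (r₂ - r₁) L (F x) _ hp hC₁ hC₂
        hγ hL hδ (by linarith) ht0 hvx (η2 x) (η3 x) (norm_nonneg _) (η7 x) hpw ?_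
      by_cases hx1 : x ∈ ball z r₁
      · rw [indicator_of_mem hx1, η4 x hx1, Real.one_rpow, one_mul]
        have d3 := ((hvd x hx).rpow_const (p := γ) (Or.inr hγ)).fderiv
        have hγ0 : 0 ≤ γ := by linarith
        have e1 : P x = (γ * v x ^ (γ - 1) * t) ^ p := by
          simp only [hPdef]
          rw [aux_norm_gradient, d3, norm_smul, Real.norm_eq_abs,
            abs_of_nonneg (mul_nonneg hγ0 (Real.rpow_nonneg hvx _)), ht, aux_norm_gradient]
        rw [e1, Real.mul_rpow (mul_nonneg hγ0 (Real.rpow_nonneg hvx _)) ht0,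
          Real.mul_rpow hγ0 (Real.rpow_nonneg hvx _), ← Real.rpow_mul hvx, mul_comm (γ - 1) p]
      · rw [indicator_of_notMem hx1]
        have := η2 x
        positivity
    · have hx1 : x ∉ ball z r₁ := fun hh => hx2 (ball_subset_ball hr12.le hh)
      rw [indicator_of_notMem hx2, indicator_of_notMem hx1, zero_add]
      have hxs : x ∉ tsupport η := fun hh => hx2 (η5 hh)
      have hd0 : fderiv ℝ η x = 0 := by
        by_contra hne
        exact hxs (support_fderiv_subset ℝ hne)
      rw [hη0 x hxs, hd0, norm_zero, zero_mul, Real.zero_rpow (by linarith : p ≠ 0)] at hpw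
      simp only [mul_zero, zero_mul, add_zero] at hpw
      exact mul_nonpos_of_nonneg_of_nonpos hc0 hpw
  have iP : Integrable ((ball z r₁).indicator P) (volume.restrict U) :=
    (hPi.integrable_indicator measurableSet_ball).integrableOn
  have iV : Integrable ((ball z r₂).indicator (fun x => C / (r₂ - r₁) ^ p * v x ^ (γ * p)))
      (volume.restrict U) :=
    (IntegrableOn.integrable_indicator (hVi.const_mul _) measurableSet_ball).integrableOn
  have icF : Integrable (fun x => c * F x) (volume.restrict U) := Integrable.const_mul iF c
  have hineq := integral_mono_ae (iP.add icF) iV hpt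
  have e1 : ∫ x in U, ((ball z r₁).indicator P + fun x => c * F x) x =
      (∫ x in ball z r₁, P x) + c * ∫ x in U, F x := by
    rw [integral_add' iP icF, setIntegral_indicator measurableSet_ball,
      inter_eq_self_of_subset_right hsub1, integral_const_mul]
  have e2 : ∫ x in U, (ball z r₂).indicator (fun x => C / (r₂ - r₁) ^ p * v x ^ (γ * p)) x =
      C / (r₂ - r₁) ^ p * ∫ x in ball z r₂, v x ^ (γ * p) := by
    rw [setIntegral_indicator measurableSet_ball,
      inter_eq_self_of_subset_right hsub2, integral_const_mul]
  rw [e1, e2] at hineq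
  have := mul_nonneg hc0 hF0
  linarith
end
end

section
/- (Moser's inequality.) There exists a constant C > 0, depending only on n, p, α, C₁ and C₂, with the following property: let r > 0, z ∈ ℝⁿ, and let v be a bounded nonnegative C¹ function on the open ball B_r(z) which is a solution of div A(x,Dv) + b(x)|Dv|^α ≥ 0 in B_r(z) and satisfies r^{p−α}·(sup_{B_r(z)} v)^{α−p+1}·(ess sup_{B_r(z)} b) ≤ C₁/2. Then sup_{B_{r/2}(z)} v ≤ C·r^{−n/p}·(∫_{B_r(z)} v(x)^p dx)^{1/p}. -/
open MeasureTheory Metric Set Filter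
open scoped RealInnerProductSpace ENNReal

noncomputable section

open scoped Convolution in
lemma mollify {n : ℕ} {φ : Euc n → ℝ} (hφ : ContDiff ℝ 1 φ) (hc : HasCompactSupport φ)
    {U : Set (Euc n)} (hU : IsOpen U) (hs : tsupport φ ⊆ U) (h0 : ∀ x, 0 ≤ φ x) :
    ∃ K : Set (Euc n), IsCompact K ∧ K ⊆ U ∧ tsupport φ ⊆ K ∧ ∀ ε > 0, ∃ ψ : Euc n → ℝ,
      ContDiff ℝ (⊤ : ℕ∞) ψ ∧ HasCompactSupport ψ ∧ tsupport ψ ⊆ K ∧ (∀ x, 0 ≤ ψ x) ∧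
      (∀ x, |ψ x - φ x| ≤ ε) ∧ ∀ x, ‖gradient ψ x - gradient φ x‖ ≤ ε := by
  obtain ⟨δ, hδ, hδU⟩ := hc.isCompact.exists_cthickening_subset_open hU hs
  refine ⟨cthickening δ (tsupport φ), hc.isCompact.cthickening, hδU, self_subset_cthickening _, ?_⟩
  intro ε hε
  have hu1 : UniformContinuous φ := hc.uniformContinuous_of_continuous hφ.continuous
  have hu2 : UniformContinuous (fderiv ℝ φ) :=
    (hc.fderiv ℝ).uniformContinuous_of_continuous (hφ.continuous_fderiv one_ne_zero)
  obtain ⟨d1, hd1, H1⟩ := Metric.uniformContinuous_iff.1 hu1 ε hε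
  obtain ⟨d2, hd2, H2⟩ := Metric.uniformContinuous_iff.1 hu2 ε hε
  set ρ := min δ (min d1 d2) with hρ
  have hρ0 : 0 < ρ := by positivity
  let B : ContDiffBump (0 : Euc n) := ⟨ρ / 2, ρ, by positivity, by linarith⟩
  have hB : B.rOut = ρ := rfl
  have hloc : LocallyIntegrable φ volume := hφ.continuous.locallyIntegrable
  have hBl : LocallyIntegrable (B.normed volume) volume := B.continuous_normed.locallyIntegrable
  have hts : tsupport (B.normed volume ⋆[ContinuousLinearMap.lsmul ℝ ℝ, volume] φ)
      ⊆ cthickening δ (tsupport φ) := by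
    refine closure_minimal ?_ isClosed_cthickening
    refine (support_convolution_subset_swap _).trans ?_
    rintro _ ⟨x, hx, y, hy, rfl⟩
    rw [B.support_normed_eq, hB, mem_ball, dist_zero_right] at hy
    apply Metric.mem_cthickening_of_dist_le _ x _ _ (subset_closure hx)
    simp only [dist_self_add_left, dist_eq_norm, add_sub_cancel_left]
    exact hy.le.trans (min_le_left _ _)
  refine ⟨B.normed volume ⋆[ContinuousLinearMap.lsmul ℝ ℝ, volume] φ, ?_, ?_, hts, ?_, ?_, ?_⟩
  · exact B.hasCompactSupport_normed.contDiff_convolution_left _ B.contDiff_normed hloc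
  · exact hc.isCompact.cthickening.of_isClosed_subset (isClosed_tsupport _) hts
  · intro x
    simp only [convolution_def, ContinuousLinearMap.lsmul_apply, smul_eq_mul]
    exact integral_nonneg fun t => mul_nonneg (B.nonneg_normed _) (h0 _)
  · intro x
    rw [← Real.dist_eq]
    apply B.dist_normed_convolution_le hφ.continuous.aestronglyMeasurable
    intro y hy
    exact (H1 (lt_of_lt_of_le hy (by rw [hB]; exact (min_le_right _ _).trans (min_le_left _ _)))).le
  · intro x
    have hd := hc.hasFDerivAt_convolution_right (ContinuousLinearMap.lsmul ℝ ℝ) hBl hφ x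
    have e : ((B.normed volume ⋆[(ContinuousLinearMap.lsmul ℝ ℝ).precompR (Euc n), volume]
        fderiv ℝ φ) x) = (B.normed volume ⋆[ContinuousLinearMap.lsmul ℝ ℝ, volume]
        fderiv ℝ φ) x := by
      simp only [convolution_def]
      congr 1
    rw [e] at hd
    unfold gradient
    rw [← map_sub, LinearIsometryEquiv.norm_map, hd.fderiv, ← dist_eq_norm]
    apply B.dist_normed_convolution_le (hφ.continuous_fderiv one_ne_zero).aestronglyMeasurable
    intro y hy
    exact (H2 (lt_of_lt_of_le hy (by rw [hB]; exact (min_le_right _ _).trans (min_le_right _ _)))).le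

lemma integrable_of_bdd_compact {n : ℕ} {f : Euc n → ℝ} (hf : AEStronglyMeasurable f volume)
    {K : Set (Euc n)} (hK : IsCompact K) (h0 : ∀ x, x ∉ K → f x = 0) {M : ℝ}
    (hM : ∀ x ∈ K, |f x| ≤ M) : Integrable f volume := by
  have h1 : IntegrableOn f K volume := by
    apply Measure.integrableOn_of_bounded (M := M) hK.measure_lt_top.ne hf
    exact (ae_restrict_iff' hK.measurableSet).2 (Eventually.of_forall fun x hx => hM x hx)
  rwa [integrableOn_iff_integrable_of_support_subset] at h1
  intro x hx
  by_contra hxK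
  exact hx (h0 x hxK)

lemma gradient_continuous {n : ℕ} {φ : Euc n → ℝ} (hφ : ContDiff ℝ 1 φ) :
    Continuous (gradient φ) :=
  (LinearIsometryEquiv.continuous _).comp (hφ.continuous_fderiv one_ne_zero)

lemma gradient_off {n : ℕ} {φ : Euc n → ℝ} {x : Euc n} (hx : x ∉ tsupport φ) :
    gradient φ x = 0 := by
  have : fderiv ℝ φ x = 0 := by
    by_contra h
    exact hx (support_fderiv_subset ℝ h)
  simp [gradient, this]

lemma measurable_gradient {n : ℕ} (v : Euc n → ℝ) : Measurable (gradient v) :=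
  (LinearIsometryEquiv.continuous _).measurable.comp (measurable_fderiv ℝ v)

lemma weak_integrable {n : ℕ} {F : Euc n → Euc n} {g : Euc n → ℝ} (mF : Measurable F)
    (mg : Measurable g) {K : Set (Euc n)} (hK : IsCompact K) {M : ℝ}
    (bd : ∀ x ∈ K, ‖F x‖ ≤ M ∧ |g x| ≤ M) {φ : Euc n → ℝ} (hφ : ContDiff ℝ 1 φ)
    (hc : HasCompactSupport φ) (hs : tsupport φ ⊆ K) :
    Integrable (fun x => g x * φ x) ∧ Integrable (fun x => ⟪F x, gradient φ x⟫) := by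
  obtain ⟨N1, hN1⟩ := hc.exists_bound_of_continuous hφ.continuous
  obtain ⟨N2, hN2⟩ := hK.exists_bound_of_continuousOn (gradient_continuous hφ).continuousOn
  constructor
  · apply integrable_of_bdd_compact (mg.mul hφ.continuous.measurable).aestronglyMeasurable hK
      (M := M * N1)
    · intro x hx
      simp [image_eq_zero_of_notMem_tsupport (fun h => hx (hs h))]
    · intro x hx
      rw [Pi.mul_apply, abs_mul]
      exact mul_le_mul (bd x hx).2 (hN1 x) (abs_nonneg _) ((abs_nonneg _).trans (bd x hx).2)
  · apply integrable_of_bdd_compact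
      (mF.inner (gradient_continuous hφ).measurable).aestronglyMeasurable hK (M := M * N2)
    · intro x hx
      simp [gradient_off (fun h => hx (hs h))]
    · intro x hx
      refine (abs_real_inner_le_norm _ _).trans ?_
      exact mul_le_mul (bd x hx).1 (hN2 x hx) (norm_nonneg _) ((norm_nonneg _).trans (bd x hx).1)

lemma weak_C1_s13 {n : ℕ} {F : Euc n → Euc n} {g : Euc n → ℝ} (mF : Measurable F)
    (mg : Measurable g) {U : Set (Euc n)} (hU : IsOpen U)
    (bd : ∀ K ⊆ U, IsCompact K → ∃ M, ∀ x ∈ K, ‖F x‖ ≤ M ∧ |g x| ≤ M)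
    (h : ∀ φ : Euc n → ℝ, ContDiff ℝ (⊤ : ℕ∞) φ → HasCompactSupport φ → tsupport φ ⊆ U →
      (∀ x, 0 ≤ φ x) →
      0 ≤ (-(∫ x in U, ⟪F x, gradient φ x⟫)) + ∫ x in U, g x * φ x)
    {φ : Euc n → ℝ} (hφ : ContDiff ℝ 1 φ) (hc : HasCompactSupport φ)
    (hs : tsupport φ ⊆ U) (h0 : ∀ x, 0 ≤ φ x) :
    Integrable (fun x => g x * φ x - ⟪F x, gradient φ x⟫) ∧
      0 ≤ ∫ x, (g x * φ x - ⟪F x, gradient φ x⟫) := by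
  obtain ⟨K, hK, hKU, hsK, H⟩ := mollify hφ hc hU hs h0
  obtain ⟨M, hM⟩ := bd K hKU hK
  have I0 := weak_integrable mF mg hK hM hφ hc hsK
  refine ⟨I0.1.sub I0.2, ?_⟩
  have key : ∀ ε > 0, 0 ≤ (∫ x, (g x * φ x - ⟪F x, gradient φ x⟫)) +
      (2 * M * volume.real K) * ε := by
    intro ε hε
    obtain ⟨ψ, hψ, hψc, hψK, hψ0, e1, e2⟩ := H ε hε
    have hψ1 : ContDiff ℝ 1 ψ := hψ.of_le (by exact_mod_cast le_top)
    have I1 := weak_integrable mF mg hK hM hψ1 hψc hψK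
    have h1 := h ψ hψ hψc (hψK.trans hKU) hψ0
    have s1 : ∫ x in U, ⟪F x, gradient ψ x⟫ = ∫ x, ⟪F x, gradient ψ x⟫ := by
      apply setIntegral_eq_integral_of_forall_compl_eq_zero
      intro x hx
      simp [gradient_off (fun h => hx (hKU (hψK h)))]
    have s2 : ∫ x in U, g x * ψ x = ∫ x, g x * ψ x := by
      apply setIntegral_eq_integral_of_forall_compl_eq_zero
      intro x hx
      simp [image_eq_zero_of_notMem_tsupport (fun h => hx (hKU (hψK h)))]
    rw [s1, s2] at h1
    have h2 : 0 ≤ ∫ x, (g x * ψ x - ⟪F x, gradient ψ x⟫) := by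
      rw [integral_sub I1.1 I1.2]; linarith
    have J0 : Integrable (fun x => g x * φ x - ⟪F x, gradient φ x⟫) := I0.1.sub I0.2
    have J1 : Integrable (fun x => g x * ψ x - ⟪F x, gradient ψ x⟫) := I1.1.sub I1.2
    have J2 : Integrable (fun x => (g x * ψ x - ⟪F x, gradient ψ x⟫) -
      (g x * φ x - ⟪F x, gradient φ x⟫)) := J1.sub J0
    have h3 : ∫ x, ((g x * ψ x - ⟪F x, gradient ψ x⟫) - (g x * φ x - ⟪F x, gradient φ x⟫))
        ≤ ∫ x, K.indicator (fun _ => 2 * M * ε) x := by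
      apply integral_mono J2
      · exact (integrable_indicator_iff hK.measurableSet).2
          (integrableOn_const hK.measure_lt_top.ne)
      · intro x
        by_cases hx : x ∈ K
        · simp only [indicator_of_mem hx]
          have := hM x hx
          have a1 : g x * (ψ x - φ x) ≤ M * ε := by
            refine (le_abs_self _).trans ?_
            rw [abs_mul]
            exact mul_le_mul this.2 (e1 x) (abs_nonneg _) ((abs_nonneg _).trans this.2)
          have a2 : -⟪F x, gradient ψ x - gradient φ x⟫ ≤ M * ε := by
            refine (neg_le_abs _).trans ((abs_real_inner_le_norm _ _).trans ?_)
            exact mul_le_mul this.1 (e2 x) (norm_nonneg _) ((norm_nonneg _).trans this.1)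
          rw [inner_sub_right] at a2
          linarith
        · dsimp only
          rw [gradient_off (fun h => hx (hψK h)), gradient_off (fun h => hx (hsK h))]
          simp [indicator_of_notMem hx,
            image_eq_zero_of_notMem_tsupport (fun h => hx (hψK h)),
            image_eq_zero_of_notMem_tsupport (fun h => hx (hsK h))]
    rw [integral_sub J1 J0, integral_indicator hK.measurableSet,
      setIntegral_const, smul_eq_mul] at h3
    linarith
  apply le_of_forall_pos_le_add
  intro δ hδ
  set D := 2 * M * volume.real K
  have := key (δ / (|D| + 1)) (by positivity)
  have h4 : D * (δ / (|D| + 1)) ≤ δ := by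
    rw [mul_div_assoc', div_le_iff₀ (by positivity)]
    nlinarith [le_abs_self D]
  linarith

lemma smoothTransition_deriv_bound : ∃ G : ℝ, 1 ≤ G ∧ ∀ x, |deriv Real.smoothTransition x| ≤ G := by
  have hc : ContDiff ℝ 1 Real.smoothTransition := Real.smoothTransition.contDiff (n := 1)
  have hcont : Continuous (deriv Real.smoothTransition) := hc.continuous_deriv le_rfl
  obtain ⟨G, hG⟩ := (isCompact_Icc (a := (0:ℝ)) (b := 1)).exists_bound_of_continuousOn
    hcont.continuousOn
  refine ⟨max G 1, le_max_right _ _, fun x => ?_⟩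
  by_cases hx : x ∈ Icc (0:ℝ) 1
  · exact (hG x hx).trans (le_max_left _ _)
  · have : deriv Real.smoothTransition x = 0 := by
      rw [mem_Icc, not_and_or, not_le, not_le] at hx
      rcases hx with hx | hx
      · have : Real.smoothTransition =ᶠ[nhds x] fun _ => 0 := by
          filter_upwards [Iio_mem_nhds hx] with y hy
          exact Real.smoothTransition.zero_of_nonpos (le_of_lt hy)
        rw [this.deriv_eq]; simp
      · have : Real.smoothTransition =ᶠ[nhds x] fun _ => 1 := by
          filter_upwards [Ioi_mem_nhds hx] with y hy
          exact Real.smoothTransition.one_of_one_le (le_of_lt hy)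
        rw [this.deriv_eq]; simp
    rw [this]; simp

lemma cutoff_exists (n : ℕ) : ∃ G : ℝ, 1 ≤ G ∧ ∀ (z : Euc n) (R₁ R₂ : ℝ), 0 < R₁ → R₁ < R₂ →
    ∃ η : Euc n → ℝ, ContDiff ℝ 1 η ∧ (∀ x, 0 ≤ η x) ∧ (∀ x, η x ≤ 1) ∧
      (∀ x ∈ ball z R₁, η x = 1) ∧ (∀ x, x ∉ ball z R₂ → η x = 0) ∧
      (∀ x ∈ ball z R₂, ‖gradient η x‖ ≤ G / (R₂ - R₁)) := by
  obtain ⟨G, hG1, hG⟩ := smoothTransition_deriv_bound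
  refine ⟨2 * G, by linarith, fun z R₁ R₂ h1 h12 => ?_⟩
  have hd : 0 < R₂ ^ 2 - R₁ ^ 2 := by nlinarith
  have hst : ContDiff ℝ 1 Real.smoothTransition := Real.smoothTransition.contDiff (n := 1)
  have hin : ContDiff ℝ 1 (fun x : Euc n => (R₂ ^ 2 - ‖x - z‖ ^ 2) / (R₂ ^ 2 - R₁ ^ 2)) :=
    (contDiff_const.sub ((contDiff_id.sub contDiff_const).norm_sq ℝ)).div_const _
  refine ⟨fun x => Real.smoothTransition ((R₂ ^ 2 - ‖x - z‖ ^ 2) / (R₂ ^ 2 - R₁ ^ 2)),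
    hst.comp hin, fun x => Real.smoothTransition.nonneg _,
    fun x => Real.smoothTransition.le_one _, ?_, ?_, ?_⟩
  · intro x hx
    rw [mem_ball, dist_eq_norm] at hx
    apply Real.smoothTransition.one_of_one_le
    rw [le_div_iff₀ hd]
    nlinarith [norm_nonneg (x - z)]
  · intro x hx
    rw [mem_ball, dist_eq_norm, not_lt] at hx
    apply Real.smoothTransition.zero_of_nonpos
    apply div_nonpos_of_nonpos_of_nonneg _ hd.le
    nlinarith
  · intro x hx
    rw [mem_ball, dist_eq_norm] at hx
    have e1 : HasFDerivAt (fun x : Euc n => ‖x - z‖ ^ 2) (2 • (innerSL ℝ (x - z))) x := by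
      have := ((hasFDerivAt_id x).sub_const z).norm_sq
      simpa using this
    have e2 := (e1.const_sub (R₂ ^ 2)).mul_const ((R₂ ^ 2 - R₁ ^ 2)⁻¹)
    have e3 := ((hst.differentiable one_ne_zero)
      ((R₂ ^ 2 - ‖x - z‖ ^ 2) * (R₂ ^ 2 - R₁ ^ 2)⁻¹)).hasDerivAt.comp_hasFDerivAt x e2
    simp only [Function.comp_def, ← div_eq_mul_inv] at e3
    unfold gradient
    rw [LinearIsometryEquiv.norm_map, e3.fderiv, norm_smul, norm_smul, norm_neg, two_nsmul,
      ← two_smul ℝ, norm_smul, innerSL_apply_norm, norm_inv, Real.norm_of_nonneg hd.le,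
      Real.norm_of_nonneg (by norm_num : (0:ℝ) ≤ 2), Real.norm_eq_abs]
    have : (R₂ ^ 2 - R₁ ^ 2)⁻¹ * (2 * ‖x - z‖) ≤ 2 / (R₂ - R₁) := by
      rw [inv_mul_eq_div, div_le_div_iff₀ hd (by linarith)]
      have : 0 < R₂ - R₁ := by linarith
      nlinarith [mul_pos this this, mul_pos this h1]
    calc _ ≤ G * (2 / (R₂ - R₁)) := by
          apply mul_le_mul (hG _) this (by positivity) (by linarith)
      _ = _ := by ring

lemma young_eps {p a b ε : ℝ} (hp : 1 < p) (ha : 0 ≤ a) (hb : 0 ≤ b) (hε : 0 < ε) :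
    a ^ (p - 1) * b ≤ ε * a ^ p + ε ^ (1 - p) * b ^ p := by
  have hp1 : 0 < p - 1 := by linarith
  rcases le_or_gt b (ε * a) with h | h
  · have : a ^ (p - 1) * b ≤ ε * a ^ p := by
      calc a ^ (p - 1) * b ≤ a ^ (p - 1) * (ε * a) := by gcongr
        _ = ε * (a ^ (p - 1) * a ^ (1:ℝ)) := by rw [Real.rpow_one]; ring
        _ = ε * a ^ p := by
          rw [← Real.rpow_add_of_nonneg ha hp1.le zero_le_one]; ring_nf
    have : 0 ≤ ε ^ (1 - p) * b ^ p := by positivity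
    linarith
  · have h1 : a ≤ b / ε := by rw [le_div_iff₀ hε]; linarith
    have : a ^ (p - 1) * b ≤ ε ^ (1 - p) * b ^ p := by
      calc a ^ (p - 1) * b ≤ (b / ε) ^ (p - 1) * b := by gcongr
        _ = ε ^ (-(p - 1)) * (b ^ (p - 1) * b ^ (1:ℝ)) := by
          rw [Real.div_rpow hb hε.le, Real.rpow_one, Real.rpow_neg hε.le]; ring
        _ = ε ^ (1 - p) * b ^ p := by
          rw [← Real.rpow_add_of_nonneg hb hp1.le zero_le_one]; ring_nf
    have : 0 ≤ ε * a ^ p := by positivity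
    linarith

lemma ptw_b {p α C₁ r M B b t v : ℝ} (hp : 1 < p) (hC₁ : 0 < C₁) (hα₁ : p - 1 ≤ α)
    (hα₂ : α ≤ p) (hr : 0 < r) (hM : 0 ≤ M) (hB : 0 ≤ B)
    (hbB : b ≤ B) (ht : 0 ≤ t) (hv : 0 ≤ v) (hvM : v ≤ M)
    (H : r ^ (p - α) * M ^ (α - p + 1) * B ≤ C₁ / 2) :
    b * t ^ α * v ≤ C₁ / 2 * (t ^ p + t ^ (p - 1) * (v * r⁻¹)) := by
  have h0 : (0:ℝ) ≤ α - p + 1 := by linarith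
  have h1 : (0:ℝ) ≤ p - α := by linarith
  have h2 : (0:ℝ) ≤ p - 1 := by linarith
  have e1 : t ^ α = t ^ (p - 1) * t ^ (α - p + 1) := by
    rw [← Real.rpow_add_of_nonneg ht h2 h0]; ring_nf
  have e2 : v = v ^ (α - p + 1) * v ^ (p - α) := by
    rw [← Real.rpow_add_of_nonneg hv h0 h1]; ring_nf; rw [Real.rpow_one]
  have e3 : v ^ (p - α) = r ^ (p - α) * (v * r⁻¹) ^ (p - α) := by
    rw [← Real.mul_rpow hr.le (by positivity)]; congr 1; field_simp
  have e4 : t ^ p = t ^ (p - 1) * t := by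
    conv_rhs => rw [← Real.rpow_one t, ← Real.rpow_mul ht, one_mul]
    rw [← Real.rpow_add_of_nonneg ht h2 zero_le_one]; ring_nf
  have e5 : t ^ (α - p + 1) * (v * r⁻¹) ^ (p - α) ≤ t + v * r⁻¹ := by
    have hvr : 0 ≤ v * r⁻¹ := by positivity
    refine (Real.geom_mean_le_arith_mean2_weighted h0 h1 ht hvr (by ring)).trans ?_
    have : (α - p + 1) * t ≤ 1 * t := by gcongr; linarith
    have : (p - α) * (v * r⁻¹) ≤ 1 * (v * r⁻¹) := by gcongr; linarith
    linarith
  calc b * t ^ α * v ≤ B * t ^ α * v := by gcongr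
    _ = B * (t ^ (p - 1) * t ^ (α - p + 1)) *
        (v ^ (α - p + 1) * (r ^ (p - α) * (v * r⁻¹) ^ (p - α))) := by
      rw [← e1, ← e3, ← e2]
    _ ≤ B * (t ^ (p - 1) * t ^ (α - p + 1)) *
        (M ^ (α - p + 1) * (r ^ (p - α) * (v * r⁻¹) ^ (p - α))) := by gcongr
    _ = (r ^ (p - α) * M ^ (α - p + 1) * B) *
        (t ^ (p - 1) * (t ^ (α - p + 1) * (v * r⁻¹) ^ (p - α))) := by ring
    _ ≤ C₁ / 2 * (t ^ (p - 1) * (t + v * r⁻¹)) := by gcongr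
    _ = _ := by rw [e4]; ring

/-- the constant in the Caccioppoli inequality -/
def Kcac (p C₁ C₂ : ℝ) : ℝ :=
  (C₁ / 2 + p * C₂) * (C₁ / 4 / (C₁ / 2 + p * C₂)) ^ (1 - p)

lemma Kcac_pos {p C₁ C₂ : ℝ} (hp : 1 < p) (hC₁ : 0 < C₁) (hC₂ : 0 < C₂) : 0 < Kcac p C₁ C₂ := by
  unfold Kcac; positivity

lemma ptw_cac {p α C₁ C₂ r T b t v e N w β i1 i2 : ℝ} (hp : 1 < p) (hC₁ : 0 < C₁) (hC₂ : 0 < C₂)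
    (hβ : 1 ≤ β) (hw : 0 ≤ w) (he : 0 ≤ e) (he1 : e ≤ 1)
    (hN : N ≤ T) (hT : 0 < T) (hrT : r⁻¹ ≤ T)
    (ht : 0 ≤ t) (hv : 0 ≤ v)
    (hb : b * t ^ α * v ≤ C₁ / 2 * (t ^ p + t ^ (p - 1) * (v * r⁻¹)))
    (h1 : C₁ * t ^ p ≤ i1) (h2 : -i2 ≤ C₂ * t ^ (p - 1) * N) :
    b * t ^ α * (e ^ p * (w * v)) - (β * e ^ p * w * i1 + p * e ^ (p - 1) * (w * v) * i2) ≤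
      -(C₁ / 4) * (e ^ p * (w * t ^ p)) + Kcac p C₁ C₂ * T ^ p * (w * v ^ p) := by
  have hp1 : 0 < p - 1 := by linarith
  have s1 : b * t ^ α * (e ^ p * (w * v)) ≤
      e ^ p * w * (C₁ / 2 * (t ^ p + t ^ (p - 1) * (v * T))) := by
    calc b * t ^ α * (e ^ p * (w * v)) = e ^ p * w * (b * t ^ α * v) := by ring
      _ ≤ e ^ p * w * (C₁ / 2 * (t ^ p + t ^ (p - 1) * (v * r⁻¹))) := by gcongr
      _ ≤ _ := by gcongr
  have s2 : e ^ p * w * (C₁ * t ^ p) ≤ β * e ^ p * w * i1 := by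
    calc e ^ p * w * (C₁ * t ^ p) ≤ e ^ p * w * i1 := by gcongr
      _ = 1 * (e ^ p * w * i1) := by ring
      _ ≤ β * (e ^ p * w * i1) := by
        have : 0 ≤ i1 := le_trans (by positivity) h1
        gcongr
      _ = _ := by ring
  have s3 : -(p * e ^ (p - 1) * (w * v) * i2) ≤ p * e ^ (p - 1) * (w * v) * (C₂ * t ^ (p - 1) * T) := by
    calc -(p * e ^ (p - 1) * (w * v) * i2) = p * e ^ (p - 1) * (w * v) * (-i2) := by ring
      _ ≤ p * e ^ (p - 1) * (w * v) * (C₂ * t ^ (p - 1) * N) := by gcongr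
      _ ≤ _ := by gcongr
  have s4 : e ^ p ≤ e ^ (p - 1) := by
    rcases he.eq_or_lt with h | h
    · rw [← h, Real.zero_rpow (by linarith), Real.zero_rpow (by linarith)]
    · exact Real.rpow_le_rpow_of_exponent_ge h he1 (by linarith)
  have s5 : e ^ p * w * (C₁ / 2 * (t ^ (p - 1) * (v * T))) ≤
      e ^ (p - 1) * w * (C₁ / 2 * (t ^ (p - 1) * (v * T))) := by gcongr
  set Q := C₁ / 2 + p * C₂ with hQ
  have hQ0 : 0 < Q := by positivity
  have s6 := young_eps (p := p) (a := e * t) (b := v * T) (ε := C₁ / 4 / Q) hp (by positivity)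
    (by positivity) (by positivity)
  rw [Real.mul_rpow he ht, Real.mul_rpow he ht, Real.mul_rpow hv hT.le] at s6
  have s7 := mul_le_mul_of_nonneg_left s6 (by positivity : 0 ≤ w * Q)
  have s8 : w * Q * (C₁ / 4 / Q * (e ^ p * t ^ p) + (C₁ / 4 / Q) ^ (1 - p) * (v ^ p * T ^ p))
      = C₁ / 4 * (e ^ p * (w * t ^ p)) + Kcac p C₁ C₂ * T ^ p * (w * v ^ p) := by
    rw [Kcac, ← hQ]; field_simp
  rw [s8] at s7
  have s9 : w * Q * (e ^ (p - 1) * t ^ (p - 1) * (v * T)) =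
    e ^ (p - 1) * w * (C₁ / 2 * (t ^ (p - 1) * (v * T))) +
      p * e ^ (p - 1) * (w * v) * (C₂ * t ^ (p - 1) * T) := by rw [hQ]; ring
  rw [s9] at s7
  linarith

lemma ptw_grad {p T t v e N w γ : ℝ} (hp : 1 < p) (hγ : p ≤ γ) (hw : 0 ≤ w) (he : 0 ≤ e)
    (he1 : e ≤ 1) (hN : N ≤ T) (hT : 0 < T) (ht : 0 ≤ t) (hv : 0 ≤ v) :
    γ * e ^ p * (w * v ^ (p - 1)) * t + p * e ^ (p - 1) * (w * v ^ p) * N ≤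
      (p + γ) * T * (w * v ^ p) + γ * T ^ (1 - p) * (e ^ p * (w * t ^ p)) := by
  have hp1 : 0 < p - 1 := by linarith
  have h1 : e ^ p ≤ 1 := Real.rpow_le_one he he1 (by linarith)
  have h2 : e ^ (p - 1) ≤ 1 := Real.rpow_le_one he he1 (by linarith)
  have h3 := young_eps hp hv ht hT
  have h4 : γ * e ^ p * (w * v ^ (p - 1)) * t ≤
      γ * T * (w * v ^ p) + γ * T ^ (1 - p) * (e ^ p * (w * t ^ p)) := by
    calc γ * e ^ p * (w * v ^ (p - 1)) * t = γ * e ^ p * w * (v ^ (p - 1) * t) := by ring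
      _ ≤ γ * e ^ p * w * (T * v ^ p + T ^ (1 - p) * t ^ p) := by
        have : 0 ≤ γ := by linarith
        gcongr
      _ = e ^ p * (γ * T * (w * v ^ p)) + γ * T ^ (1 - p) * (e ^ p * (w * t ^ p)) := by ring
      _ ≤ 1 * (γ * T * (w * v ^ p)) + γ * T ^ (1 - p) * (e ^ p * (w * t ^ p)) := by
        have : 0 ≤ γ := by linarith
        gcongr
      _ = _ := by ring
  have h5 : p * e ^ (p - 1) * (w * v ^ p) * N ≤ p * T * (w * v ^ p) := by
    calc p * e ^ (p - 1) * (w * v ^ p) * N ≤ p * e ^ (p - 1) * (w * v ^ p) * T := by gcongr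
      _ ≤ p * 1 * (w * v ^ p) * T := by gcongr
      _ = _ := by ring
  linarith

lemma sobolev_real (n : ℕ) (hn : 2 ≤ n) : ∃ S : ℝ, 0 < S ∧ ∀ u : Euc n → ℝ, ContDiff ℝ 1 u →
    HasCompactSupport u → (∀ x, 0 ≤ u x) →
    ∀ s : Set (Euc n), MeasurableSet s →
    ∫ x in s, u x ^ ((n:ℝ) / (n - 1)) ≤ S * (∫ x, ‖gradient u x‖) ^ ((n:ℝ) / (n - 1)) := by
  have hn' : (2:ℝ) ≤ n := by exact_mod_cast hn
  set χ : ℝ := (n:ℝ) / (n - 1) with hχ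
  have hχ0 : 0 < χ := by apply div_pos <;> linarith
  have hconj : Real.HolderConjugate (Module.finrank ℝ (Euc n)) χ := by
    rw [finrank_euclideanSpace_fin]
    exact Real.HolderConjugate.conjExponent (by linarith)
  refine ⟨lintegralPowLePowLIntegralFDerivConst (volume : Measure (Euc n)) χ + 1,
    by positivity, ?_⟩
  intro u hu hc h0 s hs
  have h1 := lintegral_pow_le_pow_lintegral_fderiv (volume : Measure (Euc n)) hu hc hconj
  set C := lintegralPowLePowLIntegralFDerivConst (volume : Measure (Euc n)) χ
  have eg : ∀ x, ‖fderiv ℝ u x‖ₑ = ‖gradient u x‖ₑ := by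
    intro x
    rw [← ofReal_norm, ← ofReal_norm, gradient, LinearIsometryEquiv.norm_map]
  have hgi : Integrable (gradient u) := by
    apply (gradient_continuous hu).integrable_of_hasCompactSupport
    apply hc.mono'
    intro x hx
    by_contra h
    exact hx (gradient_off h)
  have hui : Integrable (fun x => u x ^ χ) := by
    apply (hu.continuous.rpow_const fun x => Or.inr hχ0.le).integrable_of_hasCompactSupport
    apply hc.mono'
    intro x hx
    by_contra h
    apply hx
    simp only [image_eq_zero_of_notMem_tsupport h]
    exact Real.zero_rpow hχ0.ne'
  simp_rw [eg] at h1
  rw [← ofReal_integral_norm_eq_lintegral_enorm hgi] at h1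
  have e2 : ∫⁻ x, ‖u x‖ₑ ^ χ = ENNReal.ofReal (∫ x, u x ^ χ) := by
    rw [ofReal_integral_eq_lintegral_ofReal hui (Eventually.of_forall fun x => Real.rpow_nonneg (h0 x) _)]
    congr 1
    ext x
    rw [← ofReal_norm, Real.norm_of_nonneg (h0 x), ENNReal.ofReal_rpow_of_nonneg (h0 x) hχ0.le]
  have hI : 0 ≤ ∫ x, ‖gradient u x‖ := integral_nonneg fun x => norm_nonneg _
  rw [e2, ENNReal.ofReal_rpow_of_nonneg hI hχ0.le, ← ENNReal.ofReal_coe_nnreal,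
    ← ENNReal.ofReal_mul C.coe_nonneg, ENNReal.ofReal_le_ofReal_iff (by positivity)] at h1
  calc ∫ x in s, u x ^ χ ≤ ∫ x, u x ^ χ :=
        setIntegral_le_integral hui (Eventually.of_forall fun x => Real.rpow_nonneg (h0 x) _)
    _ ≤ _ := h1
    _ ≤ _ := by gcongr; linarith

lemma cutoff_contDiff {n : ℕ} {k : WithTop ℕ∞} {z : Euc n} {R r : ℝ} (hR : R < r)
    {f g : Euc n → ℝ} (hf : ContDiffOn ℝ k f (ball z r)) (hg : ContDiff ℝ k g)
    (hg0 : ∀ x, x ∉ ball z R → g x = 0) :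
    ContDiff ℝ k (fun x => g x * f x) := by
  rw [contDiff_iff_contDiffAt]
  intro x
  by_cases hx : x ∈ ball z r
  · exact hg.contDiffAt.mul (hf.contDiffAt (isOpen_ball.mem_nhds hx))
  · have hx' : x ∈ (closedBall z R)ᶜ := by
      intro h
      rw [mem_ball, not_lt] at hx
      rw [mem_closedBall] at h
      linarith
    have : (fun x => g x * f x) =ᶠ[nhds x] fun _ => 0 := by
      filter_upwards [isClosed_closedBall.isOpen_compl.mem_nhds hx'] with y hy
      rw [hg0 y (fun h => hy (ball_subset_closedBall h)), zero_mul]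
    exact contDiffAt_const.congr_of_eventuallyEq this

lemma cutoff_tsupport {n : ℕ} {z : Euc n} {R : ℝ} {f g : Euc n → ℝ}
    (hg0 : ∀ x, x ∉ ball z R → g x = 0) :
    tsupport (fun x => g x * f x) ⊆ closedBall z R := by
  refine closure_minimal ?_ isClosed_closedBall
  intro x hx
  by_contra h
  apply hx
  show g x * f x = 0
  rw [hg0 x (fun h' => h (ball_subset_closedBall h')), zero_mul]

lemma cutoff_compact {n : ℕ} {z : Euc n} {R : ℝ} {f g : Euc n → ℝ}
    (hg0 : ∀ x, x ∉ ball z R → g x = 0) :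
    HasCompactSupport (fun x => g x * f x) :=
  (isCompact_closedBall z R).of_isClosed_subset (isClosed_tsupport _) (cutoff_tsupport hg0)

lemma gradient_zero_of_min {n : ℕ} {φ : Euc n → ℝ} (h0 : ∀ x, 0 ≤ φ x) {x : Euc n}
    (hx : φ x = 0) : gradient φ x = 0 := by
  have : IsLocalMin φ x := Eventually.of_forall fun y => by rw [hx]; exact h0 y
  simp [gradient, this.fderiv_eq_zero]

/-- gradient of `η^p v^β`. -/
lemma gradient_cut {n : ℕ} {η v : Euc n → ℝ} {x : Euc n} {p β : ℝ} (hη : DifferentiableAt ℝ η x)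
    (hv : DifferentiableAt ℝ v x) (hp : 1 ≤ p) (hβ : 1 ≤ β) :
    gradient (fun x => η x ^ p * v x ^ β) x =
      (β * η x ^ p * v x ^ (β - 1)) • gradient v x + (p * η x ^ (p - 1) * v x ^ β) • gradient η x := by
  have h1 := hη.hasFDerivAt.rpow_const (p := p) (Or.inr hp)
  have h2 := hv.hasFDerivAt.rpow_const (p := β) (Or.inr hβ)
  have h3 := h1.mul h2
  have h4 : gradient (fun x => η x ^ p * v x ^ β) x =
    (InnerProductSpace.toDual ℝ (Euc n)).symm (fderiv ℝ (fun x => η x ^ p * v x ^ β) x) := rfl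
  have h5 : fderiv ℝ (fun x => η x ^ p * v x ^ β) x = _ := h3.fderiv
  rw [h4, h5, map_add, map_smul, map_smul, map_smul, map_smul, smul_smul, smul_smul]
  unfold gradient
  congr 2 <;> ring

lemma moser_step (n : ℕ) (hn : 2 ≤ n) (p C₁ C₂ α : ℝ) (hp : 1 < p)
    (hC₁ : 0 < C₁) (hC₂ : 0 < C₂) (hα₁ : p - 1 ≤ α) :
    ∃ K : ℝ, 0 < K ∧
      ∀ (A : Euc n → Euc n → Euc n), StructCond A p C₁ C₂ →
      ∀ (b : Euc n → ℝ), Measurable b → (∀ x, 0 ≤ b x) → LocBdd b →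
      ∀ (r : ℝ) (z : Euc n) (v : Euc n → ℝ), 0 < r →
        ContDiffOn ℝ 1 v (Metric.ball z r) →
        (∀ x ∈ Metric.ball z r, 0 ≤ v x) →
        IsWeakSol A b α (fun _ => 0) (Metric.ball z r) v →
        (∀ᵐ x, x ∈ ball z r → b x * ‖gradient v x‖ ^ α * v x ≤
          C₁ / 2 * (‖gradient v x‖ ^ p + ‖gradient v x‖ ^ (p - 1) * (v x * r⁻¹))) →
        ∀ R₁ R₂ γ : ℝ, 0 < R₁ → R₁ < R₂ → R₂ < r → p ≤ γ →
          ∫ x in ball z R₁, v x ^ (γ * ((n:ℝ) / (n - 1))) ≤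
            (K * (γ / (R₂ - R₁)) * ∫ x in ball z R₂, v x ^ γ) ^ ((n:ℝ) / (n - 1)) := by
  obtain ⟨G, hG1, hG⟩ := cutoff_exists n
  obtain ⟨S, hS, hSob⟩ := sobolev_real n hn
  have hn' : (2:ℝ) ≤ n := by exact_mod_cast hn
  set χ : ℝ := (n:ℝ) / (n - 1) with hχ
  have hχ0 : 0 < χ := by apply div_pos <;> linarith
  have hKc := Kcac_pos hp hC₁ hC₂
  set Kc := Kcac p C₁ C₂ with hKcdef
  refine ⟨S ^ (1 / χ) * ((2 + 4 / C₁ * Kc) * G), by positivity, ?_⟩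
  intro A hA b mb b0 bloc r z v hr hv v0 hsol hptw R₁ R₂ γ hR1 hR12 hR2 hγ
  obtain ⟨η, hη, η0, η1, ηin, ηout, ηgrad⟩ := hG z R₁ R₂ hR1 hR12
  have hd : 0 < R₂ - R₁ := by linarith
  set T := G / (R₂ - R₁) with hT
  have hT0 : 0 < T := by positivity
  have hrT : r⁻¹ ≤ T := by
    rw [hT, inv_eq_one_div, div_le_div_iff₀ hr hd]; nlinarith
  have hγ0 : 0 < γ := by linarith
  have hp0 : 0 < p := by linarith
  set β := γ - p + 1 with hβ
  have hβ1 : 1 ≤ β := by linarith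
  have hsub : closedBall z R₂ ⊆ ball z r := closedBall_subset_ball hR2
  have hsub' : ball z R₂ ⊆ ball z r := ball_subset_closedBall.trans hsub
  have hηp : ContDiff ℝ 1 (fun x => η x ^ p) := by
    rw [contDiff_iff_contDiffAt]; intro x
    exact hη.contDiffAt.rpow_const_of_le (m := 1) (by exact_mod_cast hp.le)
  have hηp0 : ∀ x, x ∉ ball z R₂ → η x ^ p = 0 := by
    intro x hx; rw [ηout x hx, Real.zero_rpow hp0.ne']
  have hvβ : ContDiffOn ℝ 1 (fun x => v x ^ β) (ball z r) :=
    hv.rpow_const_of_le (m := 1) (by exact_mod_cast hβ1)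
  have hvγ : ContDiffOn ℝ 1 (fun x => v x ^ γ) (ball z r) :=
    hv.rpow_const_of_le (m := 1) (by push_cast; linarith)
  have hvd : ∀ x ∈ ball z r, DifferentiableAt ℝ v x := fun x hx =>
    (hv.contDiffAt (isOpen_ball.mem_nhds hx)).differentiableAt one_ne_zero
  have hgc : ContinuousOn (gradient v) (ball z r) :=
    (LinearIsometryEquiv.continuous _).comp_continuousOn
      (hv.continuousOn_fderiv_of_isOpen isOpen_ball le_rfl)
  -- nonnegativity of cut functions
  have hnn : ∀ q : ℝ, ∀ x, 0 ≤ η x ^ p * v x ^ q := by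
    intro q x
    by_cases hx : x ∈ ball z R₂
    · exact mul_nonneg (Real.rpow_nonneg (η0 x) _) (Real.rpow_nonneg (v0 x (hsub' hx)) _)
    · rw [hηp0 x hx, zero_mul]
  -- the energy
  set E : Euc n → ℝ := fun x => η x ^ p * (v x ^ (β - 1) * ‖gradient v x‖ ^ p) with hE
  have hEc : Continuous E := by
    rw [← contDiff_zero (𝕜 := ℝ)]
    apply cutoff_contDiff hR2 _ (hηp.of_le zero_le_one) hηp0
    rw [contDiffOn_zero]
    exact (hv.continuousOn.rpow_const fun x _ => Or.inr (by linarith)).mul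
      (hgc.norm.rpow_const fun x _ => Or.inr hp0.le)
  have hEi : Integrable E := hEc.integrable_of_hasCompactSupport (cutoff_compact hηp0)
  -- the integral of v^γ
  have hvi : IntegrableOn (fun x => v x ^ γ) (ball z R₂) :=
    ((hvγ.continuousOn.mono hsub).integrableOn_compact (isCompact_closedBall z R₂)).mono_set
      ball_subset_closedBall
  set I := ∫ x in ball z R₂, v x ^ γ with hI
  have hI0 : 0 ≤ I := setIntegral_nonneg measurableSet_ball
    fun x hx => Real.rpow_nonneg (v0 x (hsub' hx)) _
  have hvind : Integrable ((ball z R₂).indicator (fun x => v x ^ γ)) :=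
    (integrable_indicator_iff measurableSet_ball).2 hvi
  have hIind : ∫ x, (ball z R₂).indicator (fun x => v x ^ γ) x = I :=
    integral_indicator measurableSet_ball
  -- Caccioppoli
  have hcac : ∫ x, E x ≤ 4 / C₁ * Kc * T ^ p * I := by
    have mg := measurable_gradient v
    have mF : Measurable (fun x => A x (gradient v x)) := hA.1.comp (measurable_id.prodMk mg)
    have mgg : Measurable (fun x => b x * ‖gradient v x‖ ^ α) := mb.mul (mg.norm.pow_const α)
    have hW := weak_C1_s13 mF mgg isOpen_ball (U := ball z r) ?_ ?_
      (cutoff_contDiff hR2 hvβ hηp hηp0) (cutoff_compact hηp0)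
      ((cutoff_tsupport hηp0).trans hsub) (hnn β)
    · have hle : ∫ x, (b x * ‖gradient v x‖ ^ α * (η x ^ p * v x ^ β) -
          ⟪A x (gradient v x), gradient (fun x => η x ^ p * v x ^ β) x⟫) ≤
          ∫ x, (-(C₁ / 4) * E x +
            Kc * T ^ p * (ball z R₂).indicator (fun x => v x ^ γ) x) := by
        apply integral_mono_ae hW.1 ((hEi.const_mul _).add (hvind.const_mul _))
        filter_upwards [hptw] with x hx
        rw [Pi.add_apply]
        by_cases hxR : x ∈ ball z R₂
        · have hxr := hsub' hxR
          have hvx := v0 x hxr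
          rw [indicator_of_mem hxR, gradient_cut ((hη.differentiable one_ne_zero) x)
            (hvd x hxr) hp.le hβ1, inner_add_right, inner_smul_right, inner_smul_right]
          have e1 : v x ^ β = v x ^ (β - 1) * v x := by
            conv_rhs => rw [← Real.rpow_one (v x), ← Real.rpow_mul hvx, one_mul]
            rw [← Real.rpow_add_of_nonneg hvx (by linarith) zero_le_one]; ring_nf
          have e2 : v x ^ γ = v x ^ (β - 1) * v x ^ p := by
            rw [← Real.rpow_add_of_nonneg hvx (by linarith) hp0.le]; congr 1; rw [hβ]; ring
          rw [e1, e2]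
          have hAx := hA.2 x (gradient v x)
          apply ptw_cac (r := r) (N := ‖gradient η x‖) hp hC₁ hC₂ hβ1 (Real.rpow_nonneg hvx _)
            (η0 x) (η1 x) (ηgrad x hxR) hT0 hrT (norm_nonneg _) hvx (hx hxr)
          · rw [real_inner_comm]; exact hAx.1
          · refine (neg_le_abs _).trans ((abs_real_inner_le_norm _ _).trans ?_)
            exact mul_le_mul_of_nonneg_right hAx.2 (norm_nonneg _)
        · have hz := hηp0 x hxR
          rw [indicator_of_notMem hxR, gradient_zero_of_min (hnn β) (by rw [hz, zero_mul])]
          simp [hE, hz]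
      rw [integral_add (hEi.const_mul _) (hvind.const_mul _), integral_const_mul,
        integral_const_mul, hIind] at hle
      have h3 := hW.2.trans hle
      have h4 : C₁ / 4 * ∫ x, E x ≤ Kc * T ^ p * I := by linarith
      calc ∫ x, E x = 4 / C₁ * (C₁ / 4 * ∫ x, E x) := by field_simp
        _ ≤ 4 / C₁ * (Kc * T ^ p * I) := by gcongr
        _ = _ := by ring
    · intro K hK hKc
      obtain ⟨N, hN⟩ := hKc.exists_bound_of_continuousOn (hgc.mono hK)
      obtain ⟨Bb, hBb⟩ := bloc K hKc
      refine ⟨max (C₂ * |N| ^ (p - 1)) (Bb * |N| ^ α), fun x hx => ⟨?_, ?_⟩⟩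
      · refine (hA.2 x (gradient v x)).2.trans (le_trans ?_ (le_max_left _ _))
        have := (hN x hx).trans (le_abs_self N)
        have : 0 ≤ p - 1 := by linarith
        gcongr
      · refine le_trans ?_ (le_max_right _ _)
        rw [abs_of_nonneg (mul_nonneg (b0 x) (Real.rpow_nonneg (norm_nonneg _) _))]
        have h1 := (hN x hx).trans (le_abs_self N)
        have h2 : 0 ≤ α := by linarith
        have h3 := hBb x hx
        have h4 := b0 x
        have : 0 ≤ Bb := h4.trans h3
        gcongr
    · intro φ h1 h2 h3 h4
      have := hsol φ h1 h2 h3 h4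
      simpa only [zero_mul, integral_zero] using this
  -- gradient of u
  set u : Euc n → ℝ := fun x => η x ^ p * v x ^ γ with hu
  have huC : ContDiff ℝ 1 u := cutoff_contDiff hR2 hvγ hηp hηp0
  have huc : HasCompactSupport u := cutoff_compact hηp0
  have hgrad : ∫ x, ‖gradient u x‖ ≤ (p + γ) * T * I + γ * T ^ (1 - p) * ∫ x, E x := by
    rw [← hIind, ← integral_const_mul, ← integral_const_mul,
      ← integral_add (hvind.const_mul _) (hEi.const_mul _)]
    apply integral_mono_of_nonneg (Eventually.of_forall fun x => norm_nonneg _)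
      ((hvind.const_mul _).add (hEi.const_mul _))
    refine Eventually.of_forall fun x => ?_
    by_cases hxR : x ∈ ball z R₂
    · have hxr := hsub' hxR
      have hvx := v0 x hxr
      have hηx := η0 x
      simp only [indicator_of_mem hxR, Pi.add_apply]
      rw [hu, gradient_cut ((hη.differentiable one_ne_zero) x) (hvd x hxr) hp.le (by linarith)]
      have e1 : v x ^ (γ - 1) = v x ^ (β - 1) * v x ^ (p - 1) := by
        rw [← Real.rpow_add_of_nonneg hvx (by linarith) (by linarith)]; congr 1; rw [hβ]; ring
      have e2 : v x ^ γ = v x ^ (β - 1) * v x ^ p := by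
        rw [← Real.rpow_add_of_nonneg hvx (by linarith) hp0.le]; congr 1; rw [hβ]; ring
      refine (norm_add_le _ _).trans ?_
      rw [norm_smul, norm_smul, Real.norm_of_nonneg (by positivity),
        Real.norm_of_nonneg (by positivity), e1, e2]
      exact ptw_grad hp hγ (Real.rpow_nonneg hvx _) hηx (η1 x) (ηgrad x hxR) hT0
        (norm_nonneg _) hvx
    · have hz := hηp0 x hxR
      have hg0 : gradient u x = 0 := gradient_zero_of_min (hnn γ) (by rw [hz, zero_mul])
      simp [hg0, indicator_of_notMem hxR, hE, hz]
  have hfin : ∫ x, ‖gradient u x‖ ≤ (2 + 4 / C₁ * Kc) * G * (γ / (R₂ - R₁)) * I := by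
    refine hgrad.trans ?_
    have e : T ^ (1 - p) * T ^ p = T := by
      rw [← Real.rpow_add hT0]; ring_nf; rw [Real.rpow_one]
    calc (p + γ) * T * I + γ * T ^ (1 - p) * ∫ x, E x
        ≤ (γ + γ) * T * I + γ * T ^ (1 - p) * (4 / C₁ * Kc * T ^ p * I) := by gcongr
      _ = 2 * γ * T * I + γ * (4 / C₁ * Kc) * (T ^ (1 - p) * T ^ p) * I := by ring
      _ = _ := by rw [e, hT]; ring
  have hs := hSob u huC huc (hnn γ) (ball z R₁) measurableSet_ball
  have e1 : ∫ x in ball z R₁, u x ^ χ = ∫ x in ball z R₁, v x ^ (γ * χ) := by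
    apply setIntegral_congr_fun measurableSet_ball
    intro x hx
    have hvx := v0 x (hsub' (ball_subset_ball hR12.le hx))
    simp only [hu, ηin x hx, Real.one_rpow, one_mul]
    rw [← Real.rpow_mul hvx]
  rw [e1] at hs
  refine hs.trans ?_
  have hgn : 0 ≤ ∫ x, ‖gradient u x‖ := integral_nonneg fun x => norm_nonneg _
  calc S * (∫ x, ‖gradient u x‖) ^ χ
      ≤ S * ((2 + 4 / C₁ * Kc) * G * (γ / (R₂ - R₁)) * I) ^ χ := by gcongr
    _ = (S ^ (1 / χ)) ^ χ * ((2 + 4 / C₁ * Kc) * G * (γ / (R₂ - R₁)) * I) ^ χ := by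
      rw [← Real.rpow_mul hS.le, one_div_mul_cancel hχ0.ne', Real.rpow_one]
    _ = _ := by
      rw [← Real.mul_rpow (by positivity) (by positivity)]; ring_nf

lemma moser_rec {χ D L : ℝ} (hχ : 1 < χ) (hD : 0 < D) (hL : 1 ≤ L) : ∃ m : ℝ, 0 < m ∧
    ∀ J : ℕ → ℝ, (∀ k, 0 ≤ J k) → (∀ k, J (k + 1) ≤ (D * L ^ k * J k) ^ χ) →
      ∀ k, J k ≤ (J 0 / m) ^ (χ ^ k) * m := by
  have hχ1 : 0 < χ - 1 := by linarith
  have hχ0 : 0 < χ := by linarith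
  have hL0 : 0 < L := by linarith
  set l := L ^ (χ / (χ - 1)) with hl
  have hl0 : 0 < l := by positivity
  have hl1 : 1 ≤ l := Real.one_le_rpow hL (by positivity)
  set m := (l⁻¹ * D ^ (-χ)) ^ (1 / (χ - 1)) with hm
  have hm0 : 0 < m := by positivity
  have f1 : L ^ χ * l = l ^ χ := by
    rw [hl, ← Real.rpow_mul hL0.le, ← Real.rpow_add hL0]; congr 1; field_simp; ring
  have f2 : D ^ χ * m ^ χ * l = m := by
    have : m ^ χ = m ^ (χ - 1) * m := by
      conv_lhs => rw [show χ = (χ - 1) + 1 by ring, Real.rpow_add hm0, Real.rpow_one]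
    rw [this]
    have : m ^ (χ - 1) = l⁻¹ * D ^ (-χ) := by
      rw [hm, ← Real.rpow_mul (by positivity), one_div_mul_cancel hχ1.ne', Real.rpow_one]
    rw [this, Real.rpow_neg hD.le]
    field_simp
  refine ⟨m, hm0, fun J hJ hrec => ?_⟩
  set H := J 0 / m with hH
  have hH0 : 0 ≤ H := div_nonneg (hJ 0) hm0.le
  have main : ∀ k, J k ≤ H ^ (χ ^ k) * m * (l ^ k)⁻¹ := by
    intro k
    induction k with
    | zero => simp [hH]; field_simp; exact le_rfl
    | succ k ih =>
      have hHk : 0 ≤ H ^ (χ ^ k) := Real.rpow_nonneg hH0 _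
      calc J (k + 1) ≤ (D * L ^ k * J k) ^ χ := hrec k
        _ ≤ (D * L ^ k * (H ^ (χ ^ k) * m * (l ^ k)⁻¹)) ^ χ := by
          have := hJ k
          gcongr
        _ = D ^ χ * (L ^ k) ^ χ * (H ^ (χ ^ k)) ^ χ * m ^ χ * ((l ^ k) ^ χ)⁻¹ := by
          rw [Real.mul_rpow (by positivity) (by positivity), Real.mul_rpow (by positivity)
            (by positivity), Real.mul_rpow (by positivity) (by positivity), Real.mul_rpow hHk
            (by positivity), Real.inv_rpow (by positivity)]
          ring
        _ = D ^ χ * (L ^ χ) ^ k * H ^ (χ ^ (k + 1)) * m ^ χ * ((l ^ χ) ^ k)⁻¹ := by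
          rw [← Real.rpow_mul hH0, ← pow_succ, Real.rpow_pow_comm hL0.le χ k,
            Real.rpow_pow_comm hl0.le χ k]
        _ = (D ^ χ * m ^ χ * l) * H ^ (χ ^ (k + 1)) * (l ^ (k + 1))⁻¹ := by
          rw [← f1, mul_pow, pow_succ l]
          field_simp
        _ = _ := by rw [f2]; ring
  intro k
  refine (main k).trans ?_
  have : (l ^ k)⁻¹ ≤ 1 := inv_le_one_of_one_le₀ (one_le_pow₀ hl1)
  have h2 : 0 ≤ H ^ (χ ^ k) * m := mul_nonneg (Real.rpow_nonneg hH0 _) hm0.le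
  nlinarith

lemma rpow_seq_bound {χ q H c m : ℝ} (hχ : 1 < χ) (hH : 0 ≤ H) (hc : 0 < c)
    (h : ∀ k : ℕ, c * q ^ (χ ^ k) ≤ H ^ (χ ^ k) * m) (hm : 0 < m) : q ≤ H := by
  by_contra hq
  push Not at hq
  obtain ⟨q₀, h1, h2⟩ := exists_between hq
  have hq0 : 0 < q₀ := by linarith
  have h3 : Tendsto (fun k : ℕ => (q / q₀) ^ (χ ^ k)) atTop atTop :=
    (tendsto_rpow_atTop_of_base_gt_one (q / q₀) ((one_lt_div hq0).2 h2)).comp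
      (tendsto_pow_atTop_atTop_of_one_lt hχ)
  obtain ⟨k, hk⟩ := (h3.eventually_gt_atTop (m / c)).exists
  rw [Real.div_rpow (by linarith) hq0.le, div_lt_div_iff₀ hc (by positivity)] at hk
  have h4 : H ^ (χ ^ k) ≤ q₀ ^ (χ ^ k) := by gcongr
  have h5 := h k
  nlinarith


/-- Lemma 4.5 (Moser's inequality): for a bounded nonnegative solution of
`div A(x,Dv) + b(x)|Dv|^α ≥ 0` in `B_r(z)` with
`r^{p-α} (sup v)^{α-p+1} (ess sup b) ≤ C₁/2`, one has
`sup_{B_{r/2}(z)} v ≤ C r^{-n/p} (∫_{B_r(z)} v^p)^{1/p}`. -/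
theorem stmt_13 (n : ℕ) (hn : 2 ≤ n) (p C₁ C₂ α : ℝ) (hp : 1 < p)
    (hC₁ : 0 < C₁) (hC₂ : 0 < C₂) (hα₁ : p - 1 ≤ α) (hα₂ : α ≤ p) :
    ∃ C : ℝ, 0 < C ∧
      ∀ (A : Euc n → Euc n → Euc n), StructCond A p C₁ C₂ →
      ∀ (b : Euc n → ℝ), Measurable b → (∀ x, 0 ≤ b x) → LocBdd b →
      ∀ (r : ℝ) (z : Euc n) (v : Euc n → ℝ), 0 < r →
        ContDiffOn ℝ 1 v (Metric.ball z r) →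
        (∀ x ∈ Metric.ball z r, 0 ≤ v x) →
        BddAbove (v '' Metric.ball z r) →
        IsWeakSol A b α (fun _ => 0) (Metric.ball z r) v →
        r ^ (p - α) * sSup (v '' Metric.ball z r) ^ (α - p + 1) *
            essSup b (volume.restrict (Metric.ball z r)) ≤ C₁ / 2 →
        sSup (v '' Metric.ball z (r / 2)) ≤
          C * r ^ (-(n : ℝ) / p) * (∫ x in Metric.ball z r, v x ^ p) ^ (1 / p) := by
  have hn' : (2:ℝ) ≤ n := by exact_mod_cast hn
  obtain ⟨K, hK, hstep⟩ := moser_step n hn p C₁ C₂ α hp hC₁ hC₂ hα₁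
  set χ : ℝ := (n:ℝ) / (n - 1) with hχ
  have hn1 : (0:ℝ) < n - 1 := by linarith
  have hχ1 : 1 < χ := by rw [hχ, one_lt_div hn1]; linarith
  have hχn : (n - 1) * χ = n := by rw [hχ]; field_simp
  have hp0 : 0 < p := by linarith
  obtain ⟨m, hm, hrec⟩ := moser_rec (D := 8 * p * K) (L := 2 * χ) hχ1 (by positivity)
    (by linarith)
  refine ⟨(m⁻¹) ^ (1 / p), by positivity, ?_⟩
  intro A hA b mb b0 bloc r z v hr hv v0 hbdd hsol hsmall
  set M := sSup (v '' ball z r) with hM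
  set B := essSup b (volume.restrict (ball z r)) with hB
  have hvM : ∀ x ∈ ball z r, v x ≤ M := fun x hx => le_csSup hbdd (mem_image_of_mem v hx)
  have hzr : z ∈ ball z r := mem_ball_self hr
  have hM0 : 0 ≤ M := (v0 z hzr).trans (hvM z hzr)
  -- the essential supremum of b
  have hbB : ∀ᵐ x ∂(volume.restrict (ball z r)), b x ≤ B := by
    apply ae_le_essSup
    obtain ⟨c, hc⟩ := bloc (closedBall z r) (isCompact_closedBall z r)
    refine ⟨c, ?_⟩
    rw [eventually_map]
    exact (ae_restrict_iff' measurableSet_ball).2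
      (Eventually.of_forall fun x hx => hc x (ball_subset_closedBall hx))
  have hB0 : 0 ≤ B := by
    have hne : (volume.restrict (ball z r)) ≠ 0 := by
      rw [Ne, Measure.restrict_eq_zero]
      exact (measure_ball_pos volume z hr).ne'
    haveI : (ae (volume.restrict (ball z r))).NeBot := ae_neBot.2 hne
    obtain ⟨x, hx⟩ := hbB.exists
    exact (b0 x).trans hx
  have hptw : ∀ᵐ x, x ∈ ball z r → b x * ‖gradient v x‖ ^ α * v x ≤
      C₁ / 2 * (‖gradient v x‖ ^ p + ‖gradient v x‖ ^ (p - 1) * (v x * r⁻¹)) := by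
    filter_upwards [(ae_restrict_iff' measurableSet_ball).1 hbB] with x hx hxr
    exact ptw_b hp hC₁ hα₁ hα₂ hr hM0 hB0 (hx hxr) (norm_nonneg _) (v0 x hxr) (hvM x hxr) hsmall
  have hst := hstep A hA b mb b0 bloc r z v hr hv v0 hsol hptw
  -- the sequence
  set ρ : ℕ → ℝ := fun k => r * (1 / 2 + (1 / 4) * (1 / 2) ^ k) with hρ
  have hρpos : ∀ k, r / 2 < ρ k := by
    intro k
    have : 0 < r * ((1 / 4) * (1 / 2 : ℝ) ^ k) := by positivity
    simp only [hρ]; linarith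
  have hρr : ∀ k, ρ k < r := by
    intro k
    have h1 : (1 / 2 : ℝ) ^ k ≤ 1 := pow_le_one₀ (by norm_num) (by norm_num)
    simp only [hρ]; nlinarith
  have hρd : ∀ k, ρ k - ρ (k + 1) = r / (8 * 2 ^ k) := by
    intro k
    simp only [hρ, pow_succ, one_div, inv_pow]; field_simp; ring
  set I : ℕ → ℝ := fun k => ∫ x in ball z (ρ k), v x ^ (p * χ ^ k) with hI
  have hI0 : ∀ k, 0 ≤ I k := fun k => setIntegral_nonneg measurableSet_ball
    fun x hx => Real.rpow_nonneg (v0 x (ball_subset_ball (hρr k).le hx)) _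
  have hrn : 0 < r ^ (-(n:ℝ)) := by positivity
  have hIrec : ∀ k, I (k + 1) ≤ (K * (p * χ ^ k / (ρ k - ρ (k + 1))) * I k) ^ χ := by
    intro k
    have h1 : 0 < ρ k - ρ (k + 1) := by rw [hρd]; positivity
    have h2 := hst (ρ (k + 1)) (ρ k) (p * χ ^ k) (by linarith [hρpos (k + 1)]) (by linarith)
      (hρr k) (by nlinarith [one_le_pow₀ hχ1.le (n := k)])
    have e : p * χ ^ (k + 1) = p * χ ^ k * χ := by rw [pow_succ]; ring
    simp only [hI, e]
    exact h2
  have hJ := hrec (fun k => r ^ (-(n:ℝ)) * I k) (fun k => mul_nonneg hrn.le (hI0 k)) (by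
    intro k
    have e2 : r ^ (-(n:ℝ)) = (r ^ (-((n:ℝ) - 1))) ^ χ := by
      rw [← Real.rpow_mul hr.le, neg_mul, hχn]
    have e3 : r ^ (-((n:ℝ) - 1)) = r ^ (-(n:ℝ)) * r := by
      rw [show -((n:ℝ) - 1) = -n + 1 by ring, Real.rpow_add hr, Real.rpow_one]
    calc r ^ (-(n:ℝ)) * I (k + 1)
        ≤ r ^ (-(n:ℝ)) * (K * (p * χ ^ k / (ρ k - ρ (k + 1))) * I k) ^ χ := by
          gcongr; exact hIrec k
      _ = (r ^ (-((n:ℝ) - 1))) ^ χ * (K * (p * χ ^ k / (ρ k - ρ (k + 1))) * I k) ^ χ := by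
          rw [← e2]
      _ = (r ^ (-((n:ℝ) - 1)) * (K * (p * χ ^ k / (ρ k - ρ (k + 1))) * I k)) ^ χ := by
          have h1 : 0 < ρ k - ρ (k + 1) := by rw [hρd]; positivity
          have := hI0 k
          exact (Real.mul_rpow (by positivity) (by positivity)).symm
      _ = (8 * p * K * (2 * χ) ^ k * (r ^ (-(n:ℝ)) * I k)) ^ χ := by
          congr 1
          rw [e3, hρd, mul_pow]
          field_simp)
  set H := r ^ (-(n:ℝ)) * I 0 / m with hH
  have hH0 : 0 ≤ H := div_nonneg (mul_nonneg hrn.le (hI0 0)) hm.le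
  have hvH : ∀ x ∈ ball z (r / 2), v x ^ p ≤ H := by
    intro x₀ hx₀
    have hrr : ball z (r / 2) ⊆ ball z r := ball_subset_ball (by linarith)
    apply le_of_forall_lt
    intro q' hq'
    obtain ⟨q, hq'q, hq⟩ := exists_between hq'
    refine lt_of_lt_of_le hq'q ?_
    rcases le_or_gt q 0 with hq0 | hq0
    · exact hq0.trans hH0
    have hcont : ContinuousAt (fun x => v x ^ p) x₀ :=
      (hv.continuousOn.continuousAt (isOpen_ball.mem_nhds (hrr hx₀))).rpow_const (Or.inr hp0.le)
    have hev : ∀ᶠ x in nhds x₀, q < v x ^ p := hcont.eventually_const_lt hq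
    obtain ⟨δ, hδ, hball⟩ := Metric.mem_nhds_iff.1
      (inter_mem hev (isOpen_ball.mem_nhds hx₀))
    have hμ : 0 < volume.real (ball x₀ δ) :=
      ENNReal.toReal_pos (measure_ball_pos volume x₀ hδ).ne' measure_ball_lt_top.ne
    apply rpow_seq_bound (c := r ^ (-(n:ℝ)) * volume.real (ball x₀ δ)) hχ1 hH0 (by positivity)
      (m := m) _ hm
    intro k
    refine le_trans ?_ (hJ k)
    rw [mul_assoc]
    refine mul_le_mul_of_nonneg_left ?_ hrn.le
    have hcon : ContinuousOn (fun x => v x ^ (p * χ ^ k)) (ball z r) :=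
      hv.continuousOn.rpow_const fun x _ => Or.inr (by positivity)
    have hint : IntegrableOn (fun x => v x ^ (p * χ ^ k)) (ball z (ρ k)) :=
      ((hcon.mono (closedBall_subset_ball (hρr k))).integrableOn_compact
        (isCompact_closedBall z _)).mono_set ball_subset_closedBall
    have hsub : ball x₀ δ ⊆ ball z (ρ k) := fun x hx =>
      ball_subset_ball (hρpos k).le (hball hx).2
    calc volume.real (ball x₀ δ) * q ^ χ ^ k = ∫ x in ball x₀ δ, q ^ χ ^ k := by
          rw [setIntegral_const, smul_eq_mul]
      _ ≤ ∫ x in ball x₀ δ, v x ^ (p * χ ^ k) := by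
          apply setIntegral_mono_on (integrableOn_const measure_ball_lt_top.ne)
            (hint.mono_set hsub) measurableSet_ball
          intro x hx
          have hvx := v0 x (hrr (hball hx).2)
          rw [Real.rpow_mul hvx]
          have : q < v x ^ p := (hball hx).1
          gcongr
      _ ≤ I k := by
          apply setIntegral_mono_set hint _ hsub.eventuallyLE
          exact (ae_restrict_iff' measurableSet_ball).2 (Eventually.of_forall fun x hx =>
            Real.rpow_nonneg (v0 x (ball_subset_ball (hρr k).le hx)) _)
  -- conclusion
  have hintp : IntegrableOn (fun x => v x ^ p) (ball z r) := by
    refine ⟨(hv.continuousOn.rpow_const fun x _ => Or.inr hp0.le).aestronglyMeasurable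
      measurableSet_ball, HasFiniteIntegral.restrict_of_bounded (C := M ^ p) measure_ball_lt_top
      ((ae_restrict_iff' measurableSet_ball).2 (Eventually.of_forall fun x hx => ?_))⟩
    rw [Real.norm_of_nonneg (Real.rpow_nonneg (v0 x hx) _)]
    exact Real.rpow_le_rpow (v0 x hx) (hvM x hx) hp0.le
  have hI0le : I 0 ≤ ∫ x in ball z r, v x ^ p := by
    simp only [hI, pow_zero, mul_one]
    apply setIntegral_mono_set hintp _ (ball_subset_ball (hρr 0).le).eventuallyLE
    exact (ae_restrict_iff' measurableSet_ball).2 (Eventually.of_forall fun x hx =>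
      Real.rpow_nonneg (v0 x hx) _)
  have hne : (v '' ball z (r / 2)).Nonempty := ⟨v z, z, mem_ball_self (by linarith), rfl⟩
  apply csSup_le hne
  rintro _ ⟨x, hx, rfl⟩
  have hvx := v0 x (ball_subset_ball (by linarith) hx)
  calc v x = (v x ^ p) ^ (1 / p) := by
        rw [← Real.rpow_mul hvx, mul_one_div_cancel hp0.ne', Real.rpow_one]
    _ ≤ (m⁻¹ * r ^ (-(n:ℝ)) * ∫ x in ball z r, v x ^ p) ^ (1 / p) := by
        have h1 := hvH x hx
        have h2 : H ≤ m⁻¹ * r ^ (-(n:ℝ)) * ∫ x in ball z r, v x ^ p := by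
          rw [hH, div_eq_inv_mul, ← mul_assoc]
          gcongr
        have h3 : 0 ≤ v x ^ p := Real.rpow_nonneg hvx _
        exact Real.rpow_le_rpow h3 (h1.trans h2) (by positivity)
    _ = _ := by
        rw [Real.mul_rpow (by positivity) ((hI0 0).trans hI0le), Real.mul_rpow (by positivity)
          (by positivity), ← Real.rpow_mul hr.le]
        congr 3
        ring
end
end
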